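/- Let W be a discrete memoryless channel with R_cr < C and let R ∈ (R_cr, C). Suppose W is nonsingular at rate R (i.e., there exists Q with E_r(R,Q) = E_r(R) such that the pair (Q,W) is nonsingular), and define ρ̄*_R := sup{ −∂E_r(a,Q)/∂a|_{a=R} : Q with E_r(R,Q) = E_r(R) and (Q,W) nonsingular }. Then for every ε > 0 there exists a constant K₄ > 0, depending only on W, R and ε, such that for every positive integer N there exists an (N,R) code (f,φ) with maximal error probability P_e(f,φ) ≤ K₄ · N^{−(1+ρ̄*_R−ε)/2} · e^{−N·E_r(R)}. -/

import Mathlib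

open Real BigOperators
open scoped Classical

namespace RCB

/-- A probability distribution on a finite alphabet. -/
def IsDist {α : Type*} [Fintype α] (Q : α → ℝ) : Prop :=
  (∀ a, 0 ≤ Q a) ∧ ∑ a, Q a = 1

/-- A discrete memoryless channel, i.e. a stochastic matrix from `X` to `Y`. -/
def IsChannel {X Y : Type*} [Fintype X] [Fintype Y] (W : X → Y → ℝ) : Prop :=
  (∀ x y, 0 ≤ W x y) ∧ ∀ x, ∑ y, W x y = 1

/-- The Gallager function `E_o(ρ, Q)`. -/
noncomputable def Eo {X Y : Type*} [Fintype X] [Fintype Y]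
    (W : X → Y → ℝ) (ρ : ℝ) (Q : X → ℝ) : ℝ :=
  - Real.log (∑ y, (∑ x, Q x * W x y ^ (1 / (1 + ρ))) ^ (1 + ρ))

/-- The random coding exponent `E_r(R, Q)` for input distribution `Q`. -/
noncomputable def ErQ {X Y : Type*} [Fintype X] [Fintype Y]
    (W : X → Y → ℝ) (R : ℝ) (Q : X → ℝ) : ℝ :=
  sSup ((fun ρ => -ρ * R + Eo W ρ Q) '' Set.Icc (0 : ℝ) 1)

/-- The random coding exponent `E_r(R)`. -/
noncomputable def Er {X Y : Type*} [Fintype X] [Fintype Y]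
    (W : X → Y → ℝ) (R : ℝ) : ℝ :=
  sSup {v : ℝ | ∃ Q : X → ℝ, IsDist Q ∧ v = ErQ W R Q}

/-- The mutual information `I(Q; W)` (natural logarithm). -/
noncomputable def MI {X Y : Type*} [Fintype X] [Fintype Y]
    (W : X → Y → ℝ) (Q : X → ℝ) : ℝ :=
  ∑ x, ∑ y, Q x * W x y * Real.log (W x y / ∑ x', Q x' * W x' y)

/-- The capacity `C = max_Q I(Q;W)`. -/
noncomputable def Capacity {X Y : Type*} [Fintype X] [Fintype Y]
    (W : X → Y → ℝ) : ℝ :=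
  sSup {v : ℝ | ∃ Q : X → ℝ, IsDist Q ∧ v = MI W Q}

/-- The critical rate of the input distribution `Q`:
`R_cr(Q) = ∂E_o(ρ,Q)/∂ρ |_{ρ=1}`. -/
noncomputable def RcrQ {X Y : Type*} [Fintype X] [Fintype Y]
    (W : X → Y → ℝ) (Q : X → ℝ) : ℝ :=
  deriv (fun ρ => Eo W ρ Q) 1

/-- The critical rate of the channel: the largest `R` with
`E_r(R) = -R + max_Q E_o(1,Q)`. -/
noncomputable def Rcr {X Y : Type*} [Fintype X] [Fintype Y]
    (W : X → Y → ℝ) : ℝ :=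
  sSup {R : ℝ | Er W R = -R + sSup {v : ℝ | ∃ Q : X → ℝ, IsDist Q ∧ v = Eo W 1 Q}}

/-- The rate `R_∞ = inf {R ≥ 0 : E_SP(R) < ∞}` (finiteness of the
sphere-packing exponent expressed as boundedness of the family of affine maps). -/
noncomputable def Rinf {X Y : Type*} [Fintype X] [Fintype Y]
    (W : X → Y → ℝ) : ℝ :=
  sInf {R : ℝ | 0 ≤ R ∧
    BddAbove {v : ℝ | ∃ (Q : X → ℝ) (ρ : ℝ), IsDist Q ∧ 0 ≤ ρ ∧ v = -ρ * R + Eo W ρ Q}}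

/-- The pair `(Q, W)` is singular if `W(y|x) = W(y|z)` whenever
`Q(x)W(y|x)Q(z)W(y|z) > 0`. -/
def Singular {X Y : Type*} (W : X → Y → ℝ) (Q : X → ℝ) : Prop :=
  ∀ x y z, 0 < Q x * W x y * (Q z * W z y) → W x y = W z y

/-- `ρ^*_R(Q) = -∂E_r(a,Q)/∂a |_{a=R}`. -/
noncomputable def rhoStarQ {X Y : Type*} [Fintype X] [Fintype Y]
    (W : X → Y → ℝ) (Q : X → ℝ) (R : ℝ) : ℝ :=
  - deriv (fun a => ErQ W a Q) R

/-- The number of messages of an `(N, R)` code: `⌈exp (N R)⌉`. -/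
noncomputable def nMsgs (N : ℕ) (R : ℝ) : ℕ := ⌈Real.exp (N * R)⌉₊

/-- The `N`-fold memoryless extension of the channel `W`. -/
noncomputable def Wn {X Y : Type*} (W : X → Y → ℝ) {N : ℕ}
    (c : Fin N → X) (y : Fin N → Y) : ℝ :=
  ∏ n, W (c n) (y n)

/-- The maximal error probability of the code `(f, φ)` over the `N`-fold
memoryless extension of `W`. -/
noncomputable def Pmax {X Y : Type*} [Fintype X] [Fintype Y] {M N : ℕ}
    (W : X → Y → ℝ) (f : Fin M → Fin N → X) (φ : (Fin N → Y) → Fin M) : ℝ :=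
  ⨆ m : Fin M, ∑ y : Fin N → Y, Wn W (f m) y * (if φ y ≠ m then (1 : ℝ) else 0)

/-- The ensemble average error probability `P̄_e(Q, N, R)`: the `⌈exp (N R)⌉`
codewords are drawn i.i.d. from `Q^N` and decoded by maximum-likelihood
decoding, ties counted as errors. -/
noncomputable def Pbar {X Y : Type*} [Fintype X] [Fintype Y]
    (W : X → Y → ℝ) (Q : X → ℝ) (N : ℕ) (R : ℝ) : ℝ :=
  ∑ c : Fin (nMsgs N R) → Fin N → X,
    (∏ m, ∏ n, Q (c m n)) *
      ((nMsgs N R : ℝ)⁻¹ *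
        ∑ m, ∑ y : Fin N → Y,
          Wn W (c m) y *
            (if ∃ m', m' ≠ m ∧ Wn W (c m) y ≤ Wn W (c m') y then (1 : ℝ) else 0))

/-- The tilted output distribution `f_ρ`. -/
noncomputable def fRho {X Y : Type*} [Fintype X] [Fintype Y]
    (W : X → Y → ℝ) (Q : X → ℝ) (ρ : ℝ) (y : Y) : ℝ :=
  (∑ x, Q x * W x y ^ (1 / (1 + ρ))) ^ (1 + ρ) /
    ∑ b, (∑ a, Q a * W a b ^ (1 / (1 + ρ))) ^ (1 + ρ)

/-- The cumulant generating function
`Λ_ρ(λ) = log E_{P_{X,Y}}[exp(λ log (f_ρ(Y)/W(Y|X)))]` with `P_{X,Y} = Q × W`. -/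
noncomputable def Lam {X Y : Type*} [Fintype X] [Fintype Y]
    (W : X → Y → ℝ) (Q : X → ℝ) (ρ : ℝ) (t : ℝ) : ℝ :=
  Real.log (∑ x, ∑ y, Q x * W x y * Real.exp (t * Real.log (fRho W Q ρ y / W x y)))

/-- `P_{X,Y,Z}(S̃_Q)` where `P_{X,Y,Z}(x,y,z) = Q(x)W(y|x)Q(z)` and
`S̃_Q = {(x,y,z) : Q(x)W(y|x)Q(z)W(y|z) > 0}`. -/
noncomputable def PStilde {X Y : Type*} [Fintype X] [Fintype Y]
    (W : X → Y → ℝ) (Q : X → ℝ) : ℝ :=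
  ∑ x, ∑ y, ∑ z,
    if 0 < Q x * W x y * (Q z * W z y) then Q x * W x y * Q z else 0

/-- The bivariate cumulant generating function `Λ_{1,ρ}(v)` with respect to the
conditional distribution `P̃_{X,Y,Z}` of `P_{X,Y,Z}` given `S̃_Q`. -/
noncomputable def Lam1 {X Y : Type*} [Fintype X] [Fintype Y]
    (W : X → Y → ℝ) (Q : X → ℝ) (ρ : ℝ) (v : ℝ × ℝ) : ℝ :=
  Real.log ((∑ x, ∑ y, ∑ z,
    if 0 < Q x * W x y * (Q z * W z y) then
      Q x * W x y * Q z *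
        Real.exp (v.1 * Real.log (W x y / fRho W Q ρ y) +
          v.2 * Real.log (W z y / W x y))
    else 0) / PStilde W Q)

/-- The subdifferential of `f : ℝ → ℝ` at `R` (for convex `f`). -/
def Subderiv (f : ℝ → ℝ) (R : ℝ) : Set ℝ :=
  {g : ℝ | ∀ x, f R + g * (x - R) ≤ f x}

/-- The tilted backward channel `P^ρ_{X|Y}`. -/
noncomputable def PXgY {X Y : Type*} [Fintype X]
    (W : X → Y → ℝ) (Q : X → ℝ) (ρ : ℝ) (x : X) (y : Y) : ℝ :=
  Q x * W x y ^ (1 / (1 + ρ)) / ∑ a, Q a * W a y ^ (1 / (1 + ρ))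

/-- The tilted joint distribution `P^ρ_{X,Y}(x,y) = P^ρ_{X|Y}(x|y) P^ρ_Y(y)`. -/
noncomputable def PXY {X Y : Type*} [Fintype X] [Fintype Y]
    (W : X → Y → ℝ) (Q : X → ℝ) (ρ : ℝ) (x : X) (y : Y) : ℝ :=
  PXgY W Q ρ x y * fRho W Q ρ y

/-!
The random coding union bound with expurgation gives a code with `M` messages and maximal error
probability at most `2 E[min (1, 2 M π(X, Y))]`, where `π(x, y)` is the probability that an
independent codeword `Z` is at least as likely as `x` given the output `y`. Let
`T(x, y) = log (W(y|x)^{1/(1+ρ)} / ∑ₐ Q(a) W(y|a)^{1/(1+ρ)})`, summed over the `N` letters.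
Changing the law of `Z` to the tilted backward channel bounds `π(x, y)` by `exp (-T)` times the
mean of `exp (-|log W(y|Z) - log W(y|x)| / (1+ρ))`. By nonsingularity some output letter `y₀` makes
`log W(y₀|Z)` nonconstant, and `y₀` occurs linearly often except with exponentially small
probability, so the concentration function of a sum of independent variables bounds that mean by
`B = O(N^{-1/2})`.

Since `min (1, b) ≤ b^ρ exp (-min (ρ, 1-ρ) |log b|)`, taking `b = 2 M B exp (-T)` and changing the
law of `(X, Y)` to the tilted joint distribution produces `exp (-N E_o(ρ, Q)) (2 M)^ρ`, the factor
`B^ρ = O(N^{-ρ/2})`, and another `O(N^{-1/2})` because under the tilted law `T` rarely lies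
within a bounded distance of `log (2 M B)`. For `R ∈ (R_cr, C)` the maximum defining `E_r(R, Q)` is
attained at some `ρ ∈ (0, 1)`, and the derivative of the maximum shows `-∂E_r(R, Q)/∂R ≤ ρ`.
-/

section SmallBall

/-- The sum `∑_{k ∈ ℤ} exp (-c |k|)`, by which sums of exponentially decaying terms over integer
points are bounded uniformly in the number of terms. -/
noncomputable def expAbsSum (c : ℝ) : ℝ := ∑' k : ℤ, exp (-(c * |(k : ℝ)|))

lemma summable_exp_neg_mul_abs_int {c : ℝ} (hc : 0 < c) :
    Summable fun k : ℤ => exp (-(c * |(k : ℝ)|)) := by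
  have hnat : Summable fun n : ℕ => exp (-(c * (n : ℝ))) := by
    simpa only [mul_neg, mul_comm c] using Real.summable_exp_nat_mul_iff.mpr (neg_lt_zero.mpr hc)
  exact .of_nat_of_neg (by simpa using hnat) (by simpa using hnat)

lemma sum_exp_neg_mul_abs_le_expAbsSum {c : ℝ} (hc : 0 < c) (s : Finset ℤ) :
    ∑ k ∈ s, exp (-(c * |(k : ℝ)|)) ≤ expAbsSum c :=
  (summable_exp_neg_mul_abs_int hc).sum_le_tsum s fun _ _ => (exp_pos _).le

lemma expAbsSum_pos {c : ℝ} (hc : 0 < c) : 0 < expAbsSum c :=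
  (summable_exp_neg_mul_abs_int hc).tsum_pos (fun _ => (exp_pos _).le) 0 (exp_pos _)

variable {Ω : Type*} [Fintype Ω] {p L : Ω → ℝ}

/-- The characteristic function `t ↦ ∑ ω, p ω * exp (i t L ω)` of `L` under the weights `p`,
which need not be normalised. -/
noncomputable def charSum (p L : Ω → ℝ) (t : ℝ) : ℂ :=
  ∑ ω, (p ω : ℂ) * Complex.exp ((t * L ω : ℝ) * Complex.I)

lemma norm_charSum_le (hp : ∀ ω, 0 ≤ p ω) (L : Ω → ℝ) (t : ℝ) :
    ‖charSum p L t‖ ≤ ∑ ω, p ω := by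
  refine norm_sum_le_of_le _ fun ω _ => ?_
  rw [norm_mul, Complex.norm_exp_ofReal_mul_I, mul_one, Complex.norm_of_nonneg (hp ω)]

lemma norm_charSum_sub_const (p L : Ω → ℝ) (a t : ℝ) :
    ‖charSum p (fun ω => L ω - a) t‖ = ‖charSum p L t‖ := by
  have hphase : charSum p (fun ω => L ω - a) t
      = charSum p L t * Complex.exp ((-(t * a) : ℝ) * Complex.I) := by
    simp only [charSum, Finset.sum_mul, mul_assoc, ← Complex.exp_add]
    congr! 3
    push_cast
    ring
  rw [hphase, norm_mul, Complex.norm_exp_ofReal_mul_I, mul_one]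

lemma charSum_pi {ι : Type*} [Fintype ι] [DecidableEq ι] {κ : ι → Type*} [∀ i, Fintype (κ i)]
    (p L : ∀ i, κ i → ℝ) (t : ℝ) :
    charSum (fun z : ∀ i, κ i => ∏ i, p i (z i)) (fun z => ∑ i, L i (z i)) t
      = ∏ i, charSum (p i) (L i) t := by
  simp only [charSum, Fintype.prod_sum]
  refine Fintype.sum_congr _ _ fun z => ?_
  rw [Finset.prod_mul_distrib, ← Complex.exp_sum]
  push_cast
  rw [Finset.mul_sum, Finset.sum_mul]

lemma norm_exp_mul_I_add_exp_mul_I_le {α β : ℝ} (h : |α - β| ≤ π) :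
    ‖Complex.exp (α * Complex.I) + Complex.exp (β * Complex.I)‖ ≤ 2 - (α - β) ^ 2 / π ^ 2 := by
  set s : ℝ := (α - β) ^ 2 / π ^ 2 with hs
  have hs1 : s ≤ 1 := by
    rw [hs, div_le_one (by positivity), ← sq_abs]
    gcongr
  have hcos : cos α * cos β + sin α * sin β ≤ 1 - 2 * s := by
    rw [← Real.cos_sub]
    exact (Real.cos_le_one_sub_mul_cos_sq h).trans_eq (by rw [hs]; ring)
  refine abs_le_of_sq_le_sq' ?_ (by linarith) |>.2
  rw [Complex.sq_norm, Complex.normSq_apply]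
  simp only [Complex.add_re, Complex.add_im, Complex.exp_ofReal_mul_I_re,
    Complex.exp_ofReal_mul_I_im]
  nlinarith [Real.sin_sq_add_cos_sq α, Real.sin_sq_add_cos_sq β, sq_nonneg s]

lemma norm_charSum_le_exp (hp : ∀ ω, 0 ≤ p ω) (hp1 : ∑ ω, p ω ≤ 1) {u v : Ω} (huv : u ≠ v)
    {m t : ℝ} (hm : 0 ≤ m) (hu : m ≤ p u) (hv : m ≤ p v) (ht : |t * L u - t * L v| ≤ π) :
    ‖charSum p L t‖ ≤ exp (-(m * (t * L u - t * L v) ^ 2 / π ^ 2)) := by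
  set r : Ω → ℝ := fun ω => p ω - ((if ω = u then m else 0) + if ω = v then m else 0) with hr
  have hr0 : ∀ ω, 0 ≤ r ω := by
    intro ω
    simp only [hr, sub_nonneg]
    split_ifs with h₁ h₂ h₂
    · exact absurd (h₁.symm.trans h₂) huv
    · simpa [h₁] using hu
    · simpa [h₂] using hv
    · simpa using hp ω
  have hsplit : charSum p L t = charSum r L t + m *
      (Complex.exp ((t * L u : ℝ) * Complex.I) + Complex.exp ((t * L v : ℝ) * Complex.I)) := by
    simp [charSum, hr, apply_ite Complex.ofReal, sub_mul, add_mul, mul_add,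
      Finset.sum_add_distrib]
  have hr_sum : ∑ ω, r ω = ∑ ω, p ω - 2 * m := by
    simp [hr, Finset.sum_add_distrib, two_mul]
  calc ‖charSum p L t‖
      ≤ ‖charSum r L t‖ + m * ‖Complex.exp ((t * L u : ℝ) * Complex.I)
          + Complex.exp ((t * L v : ℝ) * Complex.I)‖ := by
        rw [hsplit]
        refine (norm_add_le _ _).trans_eq ?_
        rw [norm_mul, Complex.norm_of_nonneg hm]
    _ ≤ (∑ ω, p ω - 2 * m) + m * (2 - (t * L u - t * L v) ^ 2 / π ^ 2) := by
        rw [← hr_sum]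
        exact add_le_add (norm_charSum_le hr0 L t)
          (mul_le_mul_of_nonneg_left (norm_exp_mul_I_add_exp_mul_I_le ht) hm)
    _ ≤ 1 - m * (t * L u - t * L v) ^ 2 / π ^ 2 := by
        rw [mul_sub, ← mul_div_assoc]
        linarith
    _ ≤ exp (-(m * (t * L u - t * L v) ^ 2 / π ^ 2)) := Real.one_sub_le_exp_neg _

lemma sq_mul_cos_one_le_norm_sq_geom_sum (J : ℕ) {θ x : ℝ} (hθ : 0 ≤ θ) (hθJ : θ * J ≤ 1)
    (hx : |x| ≤ 1) :
    (J * cos 1) ^ 2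
      ≤ ‖∑ j ∈ Finset.range J, Complex.exp ((j * θ * x : ℝ) * Complex.I)‖ ^ 2 := by
  refine pow_le_pow_left₀ (mul_nonneg J.cast_nonneg Real.cos_one_pos.le) ?_ 2
  refine le_trans ?_ (Complex.re_le_norm _)
  simp only [Complex.re_sum, Complex.exp_ofReal_mul_I_re]
  refine le_trans (by simp) (Finset.card_nsmul_le_sum (Finset.range J) _ (cos 1) fun j hj => ?_)
  have hjθ : j * θ ≤ 1 := by
    have : (j : ℝ) ≤ J := by exact_mod_cast (Finset.mem_range.mp hj).le
    nlinarith
  rw [← Real.cos_abs (j * θ * x)]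
  refine Real.cos_le_cos_of_nonneg_of_le_pi (abs_nonneg _) (by linarith [Real.pi_gt_three]) ?_
  rw [abs_mul, abs_of_nonneg (by positivity)]
  exact mul_le_one₀ hjθ (abs_nonneg _) hx

lemma norm_sq_geom_sum_exp_mul_I (J : ℕ) (θ x : ℝ) :
    ((‖∑ j ∈ Finset.range J, Complex.exp ((j * θ * x : ℝ) * Complex.I)‖ ^ 2 : ℝ) : ℂ)
      = ∑ j ∈ Finset.range J, ∑ k ∈ Finset.range J,
          Complex.exp ((((j : ℝ) - k) * θ * x : ℝ) * Complex.I) := by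
  rw [← Complex.normSq_eq_norm_sq, ← Complex.mul_conj, map_sum, Finset.sum_mul_sum]
  refine Finset.sum_congr rfl fun j _ => Finset.sum_congr rfl fun k _ => ?_
  rw [← Complex.exp_conj, ← Complex.exp_add]
  congr 1
  simp only [map_mul, Complex.conj_ofReal, Complex.conj_I]
  push_cast
  ring

-- Esseen's smoothing inequality, with the discrete Fejér kernel `|∑_{j < J} exp (i j θ x)|²`
-- dominating the indicator of `[-1, 1]`.
lemma sq_mul_sum_abs_le_one_le_sum_norm_charSum (hp : ∀ ω, 0 ≤ p ω) (L : Ω → ℝ) (J : ℕ) {θ : ℝ}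
    (hθ : 0 ≤ θ) (hθJ : θ * J ≤ 1) :
    (J * cos 1) ^ 2 * ∑ ω with |L ω| ≤ 1, p ω
      ≤ ∑ j ∈ Finset.range J, ∑ k ∈ Finset.range J, ‖charSum p L (((j : ℝ) - k) * θ)‖ := by
  set F : Ω → ℝ := fun ω =>
    ‖∑ j ∈ Finset.range J, Complex.exp ((j * θ * L ω : ℝ) * Complex.I)‖ ^ 2 with hF
  have hexpand : ((∑ ω, p ω * F ω : ℝ) : ℂ)
      = ∑ j ∈ Finset.range J, ∑ k ∈ Finset.range J, charSum p L (((j : ℝ) - k) * θ) := by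
    simp only [hF, charSum, Complex.ofReal_sum, Complex.ofReal_mul _ (_ ^ 2),
      norm_sq_geom_sum_exp_mul_I, Finset.mul_sum]
    rw [Finset.sum_comm]
    exact Finset.sum_congr rfl fun j _ => Finset.sum_comm
  calc (J * cos 1) ^ 2 * ∑ ω with |L ω| ≤ 1, p ω
      = ∑ ω with |L ω| ≤ 1, p ω * (J * cos 1) ^ 2 := by rw [mul_comm, Finset.sum_mul]
    _ ≤ ∑ ω with |L ω| ≤ 1, p ω * F ω := by
        refine Finset.sum_le_sum fun ω hω => mul_le_mul_of_nonneg_left ?_ (hp ω)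
        exact sq_mul_cos_one_le_norm_sq_geom_sum J hθ hθJ (Finset.mem_filter.mp hω).2
    _ ≤ ∑ ω, p ω * F ω :=
        Finset.sum_le_sum_of_subset_of_nonneg (Finset.filter_subset _ _) fun ω _ _ =>
          mul_nonneg (hp ω) (sq_nonneg _)
    _ ≤ ‖((∑ ω, p ω * F ω : ℝ) : ℂ)‖ := by
        rw [Complex.norm_real]
        exact Real.le_norm_self _
    _ ≤ _ := by
        rw [hexpand]
        exact norm_sum_le_of_le _ fun j _ => norm_sum_le _ _

lemma sum_range_exp_neg_mul_abs_sub_le {c : ℝ} (hc : 0 < c) (J j : ℕ) :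
    ∑ k ∈ Finset.range J, exp (-(c * |(j : ℝ) - k|)) ≤ expAbsSum c := by
  have hinj : Function.Injective fun k : ℕ => (j : ℤ) - k := fun k l h => by simpa using h
  simpa using sum_exp_neg_mul_abs_le_expAbsSum hc ((Finset.range J).map ⟨_, hinj⟩)

lemma sq_ceil_sqrt_le {n : ℝ} (hn : 1 ≤ n) : (⌈√n⌉₊ : ℝ) ^ 2 ≤ 4 * n := by
  have hsqrt : 1 ≤ √n := Real.one_le_sqrt.mpr hn
  have hceil : (⌈√n⌉₊ : ℝ) ≤ √n + 1 := (Nat.ceil_lt_add_one (Real.sqrt_nonneg n)).le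
  nlinarith [Real.sq_sqrt (zero_le_one.trans hn)]

lemma norm_charSum_sub_mul_le {κ τ n : ℝ} (hκ : 0 < κ) (hτ : 0 < τ)
    (h : ∀ t, |t| ≤ τ → ‖charSum p L t‖ ≤ exp (-(κ * n * t ^ 2))) {j k J : ℕ} (hj : j < J)
    (hk : k < J) (hJ : (J : ℝ) ^ 2 ≤ 4 * n) :
    ‖charSum p L (((j : ℝ) - k) * (τ / J))‖ ≤ exp (-(κ * τ ^ 2 / 4 * |(j : ℝ) - k|)) := by
  have hJ_pos : (0 : ℝ) < J := by exact_mod_cast Nat.zero_lt_of_lt hj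
  have hjk : |(j : ℝ) - k| ≤ J := abs_sub_le_of_nonneg_of_le j.cast_nonneg
    (by exact_mod_cast hj.le) k.cast_nonneg (by exact_mod_cast hk.le)
  have hjk_sq : |(j : ℝ) - k| ≤ ((j : ℝ) - k) ^ 2 := by
    rw [← sq_abs]
    exact_mod_cast Int.le_self_sq |(j : ℤ) - k|
  refine (h _ ?_).trans (exp_le_exp.mpr (neg_le_neg ?_))
  · rw [abs_mul, abs_of_pos (div_pos hτ hJ_pos), mul_div_assoc', div_le_iff₀ hJ_pos, mul_comm]
    gcongr
  · calc κ * τ ^ 2 / 4 * |(j : ℝ) - k| ≤ κ * τ ^ 2 / 4 * ((j : ℝ) - k) ^ 2 := by gcongr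
      _ = κ * τ ^ 2 * ((j : ℝ) - k) ^ 2 * (1 / 4) := by ring
      _ ≤ κ * τ ^ 2 * ((j : ℝ) - k) ^ 2 * (n / J ^ 2) := by
          refine mul_le_mul_of_nonneg_left ?_ (by positivity)
          rw [div_le_div_iff₀ (by norm_num) (by positivity)]
          linarith
      _ = κ * n * (((j : ℝ) - k) * (τ / J)) ^ 2 := by ring

lemma sum_abs_le_one_le_of_norm_charSum_le (hp : ∀ ω, 0 ≤ p ω) {κ τ n : ℝ} (hκ : 0 < κ)
    (hτ : 0 < τ) (hτ1 : τ ≤ 1) (hn : 1 ≤ n)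
    (h : ∀ t, |t| ≤ τ → ‖charSum p L t‖ ≤ exp (-(κ * n * t ^ 2))) :
    ∑ ω with |L ω| ≤ 1, p ω ≤ expAbsSum (κ * τ ^ 2 / 4) / cos 1 ^ 2 / √n := by
  set J : ℕ := ⌈√n⌉₊
  have hκτ : 0 < κ * τ ^ 2 / 4 := by positivity
  have hsqrt_pos : 0 < √n := Real.sqrt_pos.mpr (by linarith)
  have hsqrt_le : √n ≤ J := Nat.le_ceil _
  have hJ_pos : (0 : ℝ) < J := hsqrt_pos.trans_le hsqrt_le
  have hsmooth : (J * cos 1) ^ 2 * ∑ ω with |L ω| ≤ 1, p ω ≤ J * expAbsSum (κ * τ ^ 2 / 4) := by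
    calc (J * cos 1) ^ 2 * ∑ ω with |L ω| ≤ 1, p ω
        ≤ ∑ j ∈ Finset.range J, ∑ k ∈ Finset.range J, ‖charSum p L (((j : ℝ) - k) * (τ / J))‖ :=
          sq_mul_sum_abs_le_one_le_sum_norm_charSum hp L J (by positivity)
            (by rwa [div_mul_cancel₀ _ hJ_pos.ne'])
      _ ≤ ∑ j ∈ Finset.range J, expAbsSum (κ * τ ^ 2 / 4) := by
          refine Finset.sum_le_sum fun j hj => (Finset.sum_le_sum fun k hk => ?_).trans
            (sum_range_exp_neg_mul_abs_sub_le hκτ J j)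
          exact norm_charSum_sub_mul_le hκ hτ h (Finset.mem_range.mp hj) (Finset.mem_range.mp hk)
            (sq_ceil_sqrt_le hn)
      _ = J * expAbsSum (κ * τ ^ 2 / 4) := by
          rw [Finset.sum_const, Finset.card_range, nsmul_eq_mul]
  have hcos : 0 < cos 1 := Real.cos_one_pos
  have hD := expAbsSum_pos hκτ
  refine le_trans ?_ (div_le_div_of_nonneg_left (by positivity) hsqrt_pos hsqrt_le)
  rw [div_div, le_div_iff₀ (by positivity), ← mul_le_mul_iff_of_pos_left hJ_pos]
  linarith

/-- The constant of the small-ball bound for independent sums whose summands have two atoms of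
mass at least `m` at distance `d`. The frequencies used are at most `min 1 d⁻¹`, for which
`norm_charSum_le_exp` gives Gaussian decay at rate `m d² / π²`. -/
noncomputable def smallBallConst (m d : ℝ) : ℝ :=
  expAbsSum (m * d ^ 2 / π ^ 2 * min 1 d⁻¹ ^ 2 / 4) / cos 1 ^ 2

lemma smallBallConst_pos {m d : ℝ} (hm : 0 < m) (hd : 0 < d) : 0 < smallBallConst m d :=
  div_pos (expAbsSum_pos (by positivity)) (pow_pos Real.cos_one_pos 2)

lemma norm_charSum_pi_le {ι : Type*} [Fintype ι] [DecidableEq ι] {κ : ι → Type*}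
    [∀ i, Fintype (κ i)] {p L : ∀ i, κ i → ℝ} (hp : ∀ i z, 0 ≤ p i z) (hp1 : ∀ i, ∑ z, p i z ≤ 1)
    {u v : ∀ i, κ i} {G : Finset ι} {m d : ℝ} (hm : 0 ≤ m) (hd : 0 < d)
    (hG : ∀ i ∈ G, m ≤ p i (u i) ∧ m ≤ p i (v i) ∧ |L i (u i) - L i (v i)| = d) {t : ℝ}
    (ht : |t| * d ≤ π) :
    ‖charSum (fun z : ∀ i, κ i => ∏ i, p i (z i)) (fun z => ∑ i, L i (z i)) t‖
      ≤ exp (-(m * d ^ 2 / π ^ 2 * G.card * t ^ 2)) := by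
  have hatom : ∀ i ∈ G, ‖charSum (p i) (L i) t‖ ≤ exp (-(m * (t * d) ^ 2 / π ^ 2)) := by
    intro i hi
    obtain ⟨hu, hv, hdist⟩ := hG i hi
    have huv : u i ≠ v i := fun h => by simp [h, hd.ne] at hdist
    have habs : |t * L i (u i) - t * L i (v i)| = |t * d| := by
      rw [← mul_sub, abs_mul, hdist, abs_mul, abs_of_pos hd]
    rw [← sq_abs, ← habs, sq_abs]
    refine norm_charSum_le_exp (hp i) (hp1 i) huv hm hu hv ?_
    rwa [habs, abs_mul, abs_of_pos hd]
  rw [charSum_pi, norm_prod]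
  calc ∏ i, ‖charSum (p i) (L i) t‖ ≤ ∏ i ∈ G, ‖charSum (p i) (L i) t‖ := by
        rw [← Finset.prod_mul_prod_compl G]
        exact mul_le_of_le_one_right (Finset.prod_nonneg fun _ _ => norm_nonneg _)
          (Finset.prod_le_one (fun _ _ => norm_nonneg _) fun i _ =>
            (norm_charSum_le (hp i) _ _).trans (hp1 i))
    _ ≤ ∏ i ∈ G, exp (-(m * (t * d) ^ 2 / π ^ 2)) :=
        Finset.prod_le_prod (fun _ _ => norm_nonneg _) hatom
    _ = exp (-(m * d ^ 2 / π ^ 2 * G.card * t ^ 2)) := by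
        rw [Finset.prod_const, ← Real.exp_nat_mul]
        ring_nf

theorem sum_pi_abs_sub_le_one_le {ι : Type*} [Fintype ι] [DecidableEq ι] {κ : ι → Type*}
    [∀ i, Fintype (κ i)] {p L : ∀ i, κ i → ℝ} (hp : ∀ i z, 0 ≤ p i z) (hp1 : ∀ i, ∑ z, p i z ≤ 1)
    {u v : ∀ i, κ i} {G : Finset ι} (hG_ne : G.Nonempty) {m d : ℝ} (hm : 0 < m) (hd : 0 < d)
    (hG : ∀ i ∈ G, m ≤ p i (u i) ∧ m ≤ p i (v i) ∧ |L i (u i) - L i (v i)| = d) (a : ℝ) :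
    ∑ z : ∀ i, κ i with |∑ i, L i (z i) - a| ≤ 1, ∏ i, p i (z i)
      ≤ smallBallConst m d / √G.card := by
  refine sum_abs_le_one_le_of_norm_charSum_le (κ := m * d ^ 2 / π ^ 2) (τ := min 1 d⁻¹)
    (fun z => Finset.prod_nonneg fun i _ => hp i _) (by positivity) (by positivity)
    (min_le_left _ _) (by exact_mod_cast hG_ne.card_pos) fun t ht => ?_
  rw [norm_charSum_sub_const]
  refine norm_charSum_pi_le hp hp1 hm.le hd hG ?_
  calc |t| * d ≤ d⁻¹ * d := by gcongr; exact ht.trans (min_le_right _ _)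
    _ = 1 := inv_mul_cancel₀ hd.ne'
    _ ≤ π := by linarith [Real.pi_gt_three]

lemma sum_mul_exp_neg_abs_le {B c : ℝ} (hp : ∀ ω, 0 ≤ p ω)
    (hB : ∀ a : ℝ, ∑ ω with |L ω - a| ≤ 1, p ω ≤ B) (hc : 0 < c) :
    ∑ ω, p ω * exp (-(c * |L ω|)) ≤ B * (exp c * expAbsSum c) := by
  have hB0 : 0 ≤ B := (Finset.sum_nonneg fun ω _ => hp ω).trans (hB 0)
  have hlayer : ∀ k : ℤ, ∑ ω with ⌊L ω⌋ = k, p ω * exp (-(c * |L ω|))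
      ≤ B * exp c * exp (-(c * |(k : ℝ)|)) := by
    intro k
    have hclose : ∀ ω, ⌊L ω⌋ = k → |L ω - k| ≤ 1 := by
      rintro ω rfl
      rw [Int.self_sub_floor, Int.abs_fract]
      exact (Int.fract_lt_one _).le
    calc ∑ ω with ⌊L ω⌋ = k, p ω * exp (-(c * |L ω|))
        ≤ ∑ ω with |L ω - k| ≤ 1, p ω * exp (-(c * |L ω|)) :=
          Finset.sum_le_sum_of_subset_of_nonneg
            (Finset.monotone_filter_right _ fun ω _ => hclose ω)
            fun ω _ _ => mul_nonneg (hp ω) (exp_pos _).le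
      _ ≤ ∑ ω with |L ω - k| ≤ 1, p ω * exp (c - c * |(k : ℝ)|) := by
          refine Finset.sum_le_sum fun ω hω => mul_le_mul_of_nonneg_left ?_ (hp ω)
          have := (Finset.mem_filter.mp hω).2
          have := abs_sub_abs_le_abs_sub (k : ℝ) (L ω)
          rw [abs_sub_comm] at this
          exact exp_le_exp.mpr (by nlinarith)
      _ ≤ B * exp (c - c * |(k : ℝ)|) := by
          rw [← Finset.sum_mul]
          exact mul_le_mul_of_nonneg_right (hB k) (exp_pos _).le
      _ = B * exp c * exp (-(c * |(k : ℝ)|)) := by rw [mul_assoc, ← exp_add, sub_eq_add_neg]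
  rw [← Finset.sum_fiberwise_of_maps_to (t := Finset.univ.image fun ω => ⌊L ω⌋)
    (g := fun ω => ⌊L ω⌋) fun ω h => Finset.mem_image_of_mem _ h]
  refine (Finset.sum_le_sum fun k _ => hlayer k).trans ?_
  rw [← Finset.mul_sum, ← mul_assoc]
  gcongr
  exact sum_exp_neg_mul_abs_le_expAbsSum hc _

/-- The constant in the bound for the two-sided Laplace functional `E exp (-c |S - a|)` of an
independent sum `S` whose summands have two atoms of mass at least `m` at distance `d`. -/
noncomputable def laplaceConst (m d c : ℝ) : ℝ :=
  smallBallConst m d * (exp c * expAbsSum c)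

lemma laplaceConst_pos {m d c : ℝ} (hm : 0 < m) (hd : 0 < d) (hc : 0 < c) :
    0 < laplaceConst m d c :=
  mul_pos (smallBallConst_pos hm hd) (mul_pos (exp_pos c) (expAbsSum_pos hc))

theorem sum_pi_mul_exp_neg_abs_sub_le {ι : Type*} [Fintype ι] [DecidableEq ι] {κ : ι → Type*}
    [∀ i, Fintype (κ i)] {p L : ∀ i, κ i → ℝ} (hp : ∀ i z, 0 ≤ p i z) (hp1 : ∀ i, ∑ z, p i z ≤ 1)
    {u v : ∀ i, κ i} {G : Finset ι} (hG_ne : G.Nonempty) {m d c : ℝ} (hm : 0 < m) (hd : 0 < d)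
    (hc : 0 < c) (hG : ∀ i ∈ G, m ≤ p i (u i) ∧ m ≤ p i (v i) ∧ |L i (u i) - L i (v i)| = d)
    (a : ℝ) :
    ∑ z : ∀ i, κ i, (∏ i, p i (z i)) * exp (-(c * |∑ i, L i (z i) - a|))
      ≤ laplaceConst m d c / √G.card := by
  refine (sum_mul_exp_neg_abs_le (fun z => Finset.prod_nonneg fun i _ => hp i _) (fun b => ?_)
    hc).trans_eq (by rw [laplaceConst, div_mul_eq_mul_div])
  simpa only [sub_sub] using sum_pi_abs_sub_le_one_le hp hp1 hG_ne hm hd hG (a + b)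

end SmallBall

section IID

variable {ι A : Type*} {P : A → ℝ}

/-- The product distribution `P^ι`, i.e. the law of an `ι`-indexed i.i.d. family. -/
noncomputable def iidDist [Fintype ι] (P : A → ℝ) (x : ι → A) : ℝ := ∏ i, P (x i)

lemma iidDist_nonneg [Fintype ι] (hP : ∀ a, 0 ≤ P a) (x : ι → A) : 0 ≤ iidDist P x :=
  Finset.prod_nonneg fun i _ => hP (x i)

variable [Fintype A]

lemma IsDist.sum_filter_le_one (hP : IsDist P) (E : A → Prop) [DecidablePred E] :
    ∑ a with E a, P a ≤ 1 := by
  rw [← hP.2]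
  exact Finset.sum_le_sum_of_subset_of_nonneg (Finset.filter_subset _ _) fun a _ _ => hP.1 a

lemma IsDist.sum_filter_not (hP : IsDist P) (E : A → Prop) [DecidablePred E] :
    ∑ a with ¬ E a, P a = 1 - ∑ a with E a, P a := by
  rw [← hP.2, ← Finset.sum_filter_add_sum_filter_not Finset.univ E, add_sub_cancel_left]

lemma IsDist.exists_pos (hP : IsDist P) : ∃ a, 0 < P a := by
  obtain ⟨a, -, ha⟩ := Finset.exists_lt_of_sum_lt (s := Finset.univ) (f := 0) (g := P)
    (by simp [hP.2])
  exact ⟨a, ha⟩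

lemma IsDist.exists_le (hP : IsDist P) {F : A → ℝ} {b : ℝ} (h : ∑ a, P a * F a ≤ b) :
    ∃ a, F a ≤ b := by
  by_contra! hlt
  obtain ⟨a₀, ha₀⟩ := hP.exists_pos
  have : ∑ a, P a * b < ∑ a, P a * F a :=
    Finset.sum_lt_sum (fun a _ => mul_le_mul_of_nonneg_left (hlt a).le (hP.1 a))
      ⟨a₀, Finset.mem_univ a₀, mul_lt_mul_of_pos_left (hlt a₀) ha₀⟩
  rw [← Finset.sum_mul, hP.2, one_mul] at this
  exact this.not_ge h

variable [Fintype ι] [DecidableEq ι]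

lemma sum_iidDist (P : A → ℝ) : ∑ x : ι → A, iidDist P x = (∑ a, P a) ^ Fintype.card ι := by
  simp only [iidDist, ← Fintype.prod_sum fun (_ : ι) a => P a, Finset.prod_const,
    Finset.card_univ]

lemma isDist_iidDist (hP : IsDist P) : IsDist (iidDist P : (ι → A) → ℝ) :=
  ⟨iidDist_nonneg hP.1, by rw [sum_iidDist, hP.2, one_pow]⟩

lemma sum_iidDist_forall (P : A → ℝ) (E : A → Prop) [DecidablePred E] :
    ∑ c : ι → A with ∀ i, E (c i), iidDist P c = (∑ a with E a, P a) ^ Fintype.card ι := by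
  have hpi : (Finset.univ.filter fun c : ι → A => ∀ i, E (c i))
      = Fintype.piFinset fun _ => Finset.univ.filter E := by
    ext c
    simp
  rw [hpi, ← Finset.card_univ, ← Finset.prod_const]
  exact Finset.sum_prod_piFinset _ _

lemma sum_iidDist_exists_le_min (hP : IsDist P) (E : A → Prop) [DecidablePred E] :
    ∑ c : ι → A with ∃ i, E (c i), iidDist P c
      ≤ min 1 (Fintype.card ι * ∑ a with E a, P a) := by
  refine le_min ((isDist_iidDist hP).sum_filter_le_one _) ?_
  have hcompl : ∑ c : ι → A with ∃ i, E (c i), iidDist P c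
      = 1 - (1 - ∑ a with E a, P a) ^ Fintype.card ι := by
    rw [← hP.sum_filter_not, ← sum_iidDist_forall, ← (isDist_iidDist hP).sum_filter_not]
    simp only [not_forall, not_not]
  have hbernoulli := one_add_mul_le_pow (a := -∑ a with E a, P a)
    (by linarith [hP.sum_filter_le_one E]) (Fintype.card ι)
  rw [← sub_eq_add_neg] at hbernoulli
  linarith

lemma sum_iidDist_mul_apply_restrict (P : A → ℝ) (i : ι) (F : A → ({j // j ≠ i} → A) → ℝ) :
    ∑ c : ι → A, iidDist P c * F (c i) (fun j => c j)
      = ∑ x, P x * ∑ c, iidDist P c * F x c := by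
  rw [← (Equiv.funSplitAt i A).symm.sum_comp, Fintype.sum_prod_type]
  refine Fintype.sum_congr _ _ fun x => ?_
  rw [Finset.mul_sum]
  refine Fintype.sum_congr _ _ fun c => ?_
  have hrest : ∀ j : {j // j ≠ i}, (Equiv.funSplitAt i A).symm (x, c) j = c j := fun j => by
    simp [j.2]
  have hself : (Equiv.funSplitAt i A).symm (x, c) i = x := by simp
  simp only [iidDist, Fintype.prod_eq_mul_prod_subtype_ne _ i, hrest, hself, mul_assoc]

lemma sum_mul_exp_quarter_sub_indicator_le (hP : IsDist P) (E : A → Prop) [DecidablePred E] :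
    ∑ a, P a * exp ((∑ a with E a, P a) / 4 - if E a then 1 else 0)
      ≤ exp (-((∑ a with E a, P a) / 4)) := by
  set q := ∑ a with E a, P a with hq
  have hexp : ∀ a, exp (q / 4 - if E a then 1 else 0)
      ≤ exp (q / 4) * (1 - (if E a then 1 else 0) / 2) := by
    intro a
    rw [sub_eq_add_neg, exp_add]
    gcongr
    split_ifs
    · linarith [Real.exp_neg_one_lt_half]
    · simp
  calc ∑ a, P a * exp (q / 4 - if E a then 1 else 0)
      ≤ ∑ a, P a * (exp (q / 4) * (1 - (if E a then 1 else 0) / 2)) :=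
        Finset.sum_le_sum fun a _ => mul_le_mul_of_nonneg_left (hexp a) (hP.1 a)
    _ = exp (q / 4) * ∑ a, (P a - (P a * if E a then 1 else 0) / 2) := by
        rw [Finset.mul_sum]
        exact Fintype.sum_congr _ _ fun a => by ring
    _ = exp (q / 4) * (1 - q / 2) := by
        rw [Finset.sum_sub_distrib, hP.2, ← Finset.sum_div]
        simp only [hq, Finset.sum_filter, mul_ite, mul_one, mul_zero]
    _ ≤ exp (q / 4) * exp (-(q / 2)) := by
        gcongr
        exact Real.one_sub_le_exp_neg _
    _ = exp (-(q / 4)) := by rw [← exp_add]; ring_nf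

lemma sum_iidDist_card_lt_le_exp (hP : IsDist P) (E : A → Prop) [DecidablePred E] :
    ∑ ω : ι → A with ((Finset.univ.filter fun i => E (ω i)).card : ℝ)
        < (∑ a with E a, P a) / 4 * Fintype.card ι, iidDist P ω
      ≤ exp (-((∑ a with E a, P a) / 4 * Fintype.card ι)) := by
  set q := ∑ a with E a, P a
  calc _ ≤ ∑ ω : ι → A with ((Finset.univ.filter fun i => E (ω i)).card : ℝ)
        < q / 4 * Fintype.card ι, ∏ i, P (ω i) * exp (q / 4 - if E (ω i) then 1 else 0) := by
        refine Finset.sum_le_sum fun ω hω => ?_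
        rw [Finset.prod_mul_distrib, ← exp_sum, Finset.sum_sub_distrib, Finset.sum_boole,
          Finset.sum_const, Finset.card_univ, nsmul_eq_mul]
        refine le_mul_of_one_le_right (iidDist_nonneg hP.1 ω) (Real.one_le_exp ?_)
        linarith [(Finset.mem_filter.mp hω).2]
    _ ≤ ∑ ω : ι → A, iidDist (fun a => P a * exp (q / 4 - if E a then 1 else 0)) ω :=
        Finset.sum_le_sum_of_subset_of_nonneg (Finset.filter_subset _ _) fun ω _ _ =>
          Finset.prod_nonneg fun i _ => mul_nonneg (hP.1 _) (exp_pos _).le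
    _ = (∑ a, P a * exp (q / 4 - if E a then 1 else 0)) ^ Fintype.card ι :=
        sum_iidDist _
    _ ≤ exp (-(q / 4)) ^ Fintype.card ι :=
        pow_le_pow_left₀ (Finset.sum_nonneg fun a _ => mul_nonneg (hP.1 a) (exp_pos _).le)
          (sum_mul_exp_quarter_sub_indicator_le hP E) _
    _ = exp (-(q / 4 * Fintype.card ι)) := by rw [← Real.exp_nat_mul]; ring_nf

end IID

section RandomCoding

variable {ι A B : Type*} {P : A → ℝ} {V : A → B → ℝ}

lemma card_le_two_mul_card_filter_le [Fintype ι] {e : ι → ℝ} (he : ∀ i, 0 ≤ e i) {β : ℝ}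
    (h : ∑ i, e i ≤ Fintype.card ι * β) :
    Fintype.card ι ≤ 2 * (Finset.univ.filter fun i => e i ≤ 2 * β).card := by
  by_contra! hlt
  have hsplit := Finset.card_filter_add_card_filter_not (s := (Finset.univ : Finset ι))
    fun i => e i ≤ 2 * β
  rw [Finset.card_univ] at hsplit
  set bad := Finset.univ.filter fun i => ¬ e i ≤ 2 * β
  have hbad_pos : bad.Nonempty := Finset.card_pos.mp (by omega)
  have hbad_card : (Fintype.card ι : ℝ) ≤ 2 * bad.card := by exact_mod_cast (by omega)
  have hβ : 0 ≤ Fintype.card ι * β := (Finset.sum_nonneg fun i _ => he i).trans h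
  have hbad_lt : bad.card * (2 * β) < ∑ i ∈ bad, e i := by
    rw [← nsmul_eq_mul, ← Finset.sum_const]
    exact Finset.sum_lt_sum_of_nonempty hbad_pos fun i hi =>
      not_le.mp (Finset.mem_filter.mp hi).2
  have hbad_le : ∑ i ∈ bad, e i ≤ ∑ i, e i :=
    Finset.sum_le_sum_of_subset_of_nonneg (Finset.subset_univ _) fun i _ _ => he i
  have hβ0 : 0 ≤ β := nonneg_of_mul_nonneg_right hβ (by
    exact_mod_cast hbad_pos.card_pos.trans_le (Finset.card_le_univ bad))
  nlinarith

/-- The probability that a codeword drawn from `P` is at least as likely as `x` when the channel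
`V` outputs `y`. -/
noncomputable def pairwiseErrorProb [Fintype A] (P : A → ℝ) (V : A → B → ℝ) (x : A) (y : B) : ℝ :=
  ∑ z with V x y ≤ V z y, P z

lemma pairwiseErrorProb_nonneg [Fintype A] (hP : ∀ a, 0 ≤ P a) (V : A → B → ℝ) (x : A) (y : B) :
    0 ≤ pairwiseErrorProb P V x y :=
  Finset.sum_nonneg fun z _ => hP z

variable [Fintype B]

/-- The error probability of message `i` for the codebook `c` over `V` under maximum-likelihood
decoding, ties counted as errors. -/
noncomputable def tieErrorProb (V : A → B → ℝ) (c : ι → A) (i : ι) : ℝ :=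
  ∑ y with ∃ m, m ≠ i ∧ V (c i) y ≤ V (c m) y, V (c i) y

lemma tieErrorProb_nonneg (hV : ∀ a b, 0 ≤ V a b) (c : ι → A) (i : ι) :
    0 ≤ tieErrorProb V c i :=
  Finset.sum_nonneg fun y _ => hV _ y

lemma tieErrorProb_comp_le {κ : Type*} (hV : ∀ a b, 0 ≤ V a b) (c : ι → A) {e : κ → ι}
    (he : Function.Injective e) (k : κ) : tieErrorProb V (c ∘ e) k ≤ tieErrorProb V c (e k) := by
  refine Finset.sum_le_sum_of_subset_of_nonneg
    (Finset.monotone_filter_right _ fun y _ => ?_) fun y _ _ => hV _ y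
  rintro ⟨m, hm, hle⟩
  exact ⟨e m, he.ne hm, hle⟩

lemma exists_decoder_le_tieErrorProb [Finite ι] [Nonempty ι] [DecidableEq ι]
    (hV : ∀ a b, 0 ≤ V a b) (f : ι → A) :
    ∃ φ : B → ι, ∀ i, ∑ y with φ y ≠ i, V (f i) y ≤ tieErrorProb V f i := by
  choose φ hφ using fun y => Finite.exists_max fun i => V (f i) y
  exact ⟨φ, fun i => Finset.sum_le_sum_of_subset_of_nonneg
    (Finset.monotone_filter_right _ fun y _ hy => ⟨φ y, hy, hφ y i⟩) fun y _ _ => hV _ y⟩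

variable [Fintype A]

/-- The random-coding union bound for `M` competing codewords drawn from `P` over `V`. -/
noncomputable def rcuBound (P : A → ℝ) (V : A → B → ℝ) (M : ℝ) : ℝ :=
  ∑ x, P x * ∑ y, V x y * min 1 (M * pairwiseErrorProb P V x y)

lemma sum_iidDist_mul_tieErrorProb_le_rcuBound [Fintype ι] [DecidableEq ι] (hP : IsDist P)
    (hV : ∀ a b, 0 ≤ V a b) (i : ι) :
    ∑ c : ι → A, iidDist P c * tieErrorProb V c i ≤ rcuBound P V (Fintype.card ι) := by
  have htie : ∀ c : ι → A, tieErrorProb V c i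
      = ∑ y, V (c i) y * if ∃ j : {j // j ≠ i}, V (c i) y ≤ V (c j) y then 1 else 0 := by
    intro c
    simp only [tieErrorProb, Finset.sum_filter, mul_ite, mul_one, mul_zero, Subtype.exists,
      exists_prop]
    congr!
  have hunion : ∀ x y, ∑ c : {j // j ≠ i} → A with ∃ j, V x y ≤ V (c j) y, iidDist P c
      ≤ min 1 (Fintype.card ι * pairwiseErrorProb P V x y) := by
    intro x y
    refine (sum_iidDist_exists_le_min hP fun z => V x y ≤ V z y).trans (min_le_min_left _ ?_)
    refine mul_le_mul_of_nonneg_right ?_ (pairwiseErrorProb_nonneg hP.1 V x y)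
    exact_mod_cast Fintype.card_subtype_le _
  simp only [htie]
  rw [sum_iidDist_mul_apply_restrict P i fun x c =>
    ∑ y, V x y * if ∃ j, V x y ≤ V (c j) y then 1 else 0]
  refine Finset.sum_le_sum fun x _ => mul_le_mul_of_nonneg_left ?_ (hP.1 x)
  simp only [Finset.mul_sum]
  rw [Finset.sum_comm]
  refine Finset.sum_le_sum fun y _ => ?_
  calc _ = V x y * ∑ c : {j // j ≠ i} → A with ∃ j, V x y ≤ V (c j) y, iidDist P c := by
        rw [Finset.sum_filter, Finset.mul_sum]
        refine Fintype.sum_congr _ _ fun c => ?_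
        split_ifs <;> ring
    _ ≤ _ := mul_le_mul_of_nonneg_left (hunion x y) (hV x y)

lemma exists_codebook_sum_tieErrorProb_le [Fintype ι] (hP : IsDist P)
    (hV : ∀ a b, 0 ≤ V a b) :
    ∃ c : ι → A, ∑ i, tieErrorProb V c i ≤ Fintype.card ι * rcuBound P V (Fintype.card ι) := by
  refine (isDist_iidDist hP).exists_le ?_
  simp only [Finset.mul_sum]
  rw [Finset.sum_comm]
  refine (Finset.sum_le_sum fun i _ => sum_iidDist_mul_tieErrorProb_le_rcuBound hP hV i).trans ?_
  rw [Finset.sum_const, Finset.card_univ, nsmul_eq_mul]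

-- Expurgation: keep the better half of the `2 M` messages of a good random codebook.
theorem exists_code_errorProb_le_rcuBound (hP : IsDist P) (hV : ∀ a b, 0 ≤ V a b) {M : ℕ}
    (hM : 0 < M) : ∃ (f : Fin M → A) (φ : B → Fin M),
      ∀ m, ∑ y with φ y ≠ m, V (f m) y ≤ 2 * rcuBound P V (2 * M) := by
  obtain ⟨c, hc⟩ := exists_codebook_sum_tieErrorProb_le (ι := Fin (2 * M)) hP hV
  have hgood : M ≤ Fintype.card {i // tieErrorProb V c i ≤ 2 * rcuBound P V (2 * M)} := by
    have hmarkov := card_le_two_mul_card_filter_le (tieErrorProb_nonneg hV c) hc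
    rw [Fintype.card_fin] at hmarkov
    push_cast at hmarkov
    rw [Fintype.card_subtype]
    omega
  obtain ⟨e⟩ := Function.Embedding.nonempty_of_card_le (α := Fin M) (by simpa using hgood)
  have : Nonempty (Fin M) := ⟨⟨0, hM⟩⟩
  obtain ⟨φ, hφ⟩ := exists_decoder_le_tieErrorProb hV fun m => c (e m)
  exact ⟨fun m => c (e m), φ, fun m => (hφ m).trans <|
    (tieErrorProb_comp_le hV c (Subtype.val_injective.comp e.injective) m).trans (e m).2⟩

end RandomCoding

section Tilting

variable {X Y : Type*} {W : X → Y → ℝ} {Q : X → ℝ} {ρ : ℝ}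

lemma min_one_le_rpow_mul_exp {b ρ : ℝ} (hb : 0 < b) :
    min 1 b ≤ b ^ ρ * exp (-(min ρ (1 - ρ) * |log b|)) := by
  rw [Real.rpow_def_of_pos hb, ← exp_add]
  rcases le_total 0 (log b) with h | h
  · refine (min_le_left _ _).trans (Real.one_le_exp ?_)
    rw [abs_of_nonneg h]
    nlinarith [min_le_left ρ (1 - ρ)]
  · refine (min_le_right _ _).trans ?_
    rw [abs_of_nonpos h, ← Real.log_le_iff_le_exp hb]
    nlinarith [min_le_right ρ (1 - ρ)]

lemma exp_neg_mul_le_rpow_div {c r x : ℝ} (hc : 0 < c) (hr : -1 ≤ r) (hx : 1 ≤ x) :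
    exp (-(c * x)) ≤ x ^ r / c := by
  calc exp (-(c * x)) ≤ (c * x)⁻¹ := by
        rw [exp_neg]
        gcongr
        linarith [Real.add_one_le_exp (c * x)]
    _ = x ^ (-1 : ℝ) / c := by rw [Real.rpow_neg_one, mul_inv, div_eq_inv_mul]
    _ ≤ x ^ r / c := by gcongr

lemma div_sqrt_rpow_mul_div_sqrt {a b : ℝ} (ha : 0 ≤ a) {x : ℝ} (hx : 0 < x) :
    (a / √x) ^ ρ * (b / √x) = a ^ ρ * b * x ^ (-(1 + ρ) / 2) := by
  have hsqrt : √x ^ ρ * √x = (x ^ (-(1 + ρ) / 2))⁻¹ := by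
    rw [← Real.rpow_neg hx.le, Real.sqrt_eq_rpow, ← Real.rpow_mul hx.le, ← Real.rpow_add hx]
    ring_nf
  rw [Real.div_rpow ha (Real.sqrt_nonneg x), div_mul_div_comm, hsqrt, div_inv_eq_mul]

lemma mul_rpow_nonneg (hW : ∀ x y, 0 ≤ W x y) (hQ : ∀ x, 0 ≤ Q x) (s : ℝ) (x : X) (y : Y) :
    0 ≤ Q x * W x y ^ s :=
  mul_nonneg (hQ x) (Real.rpow_nonneg (hW x y) s)

lemma exists_of_not_singular (hW : ∀ x y, 0 ≤ W x y) (hQ : ∀ x, 0 ≤ Q x)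
    (hns : ¬ Singular W Q) : ∃ x₁ x₂ y, 0 < Q x₁ ∧ 0 < Q x₂ ∧ 0 < W x₁ y ∧ 0 < W x₂ y ∧
      log (W x₁ y) ≠ log (W x₂ y) := by
  simp only [Singular, not_forall] at hns
  obtain ⟨x₁, y, x₂, hpos, hne⟩ := hns
  have h₁ := left_ne_zero_of_mul hpos.ne'
  have h₂ := right_ne_zero_of_mul hpos.ne'
  have hW₁ := (hW x₁ y).lt_of_ne' (right_ne_zero_of_mul h₁)
  have hW₂ := (hW x₂ y).lt_of_ne' (right_ne_zero_of_mul h₂)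
  exact ⟨x₁, x₂, y, (hQ x₁).lt_of_ne' (left_ne_zero_of_mul h₁),
    (hQ x₂).lt_of_ne' (left_ne_zero_of_mul h₂), hW₁, hW₂,
    fun h => hne (Real.log_injOn_pos hW₁ hW₂ h)⟩

variable [Fintype X]

/-- The normalizing factor `∑ₓ Q(x) W(y|x)^{1/(1+ρ)}` of the tilted backward channel. -/
noncomputable def tiltedSum (W : X → Y → ℝ) (Q : X → ℝ) (ρ : ℝ) (y : Y) : ℝ :=
  ∑ x, Q x * W x y ^ (1 / (1 + ρ))

lemma tiltedSum_nonneg (hW : ∀ x y, 0 ≤ W x y) (hQ : ∀ x, 0 ≤ Q x) (ρ : ℝ) (y : Y) :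
    0 ≤ tiltedSum W Q ρ y :=
  Finset.sum_nonneg fun x _ => mul_rpow_nonneg hW hQ _ x y

lemma tiltedSum_pos (hW : ∀ x y, 0 ≤ W x y) (hQ : ∀ x, 0 ≤ Q x) (ρ : ℝ) {x : X} {y : Y}
    (hQx : 0 < Q x) (hWxy : 0 < W x y) : 0 < tiltedSum W Q ρ y :=
  Finset.sum_pos' (fun x _ => mul_rpow_nonneg hW hQ _ x y)
    ⟨x, Finset.mem_univ x, mul_pos hQx (Real.rpow_pos_of_pos hWxy _)⟩

lemma PXgY_nonneg (hW : ∀ x y, 0 ≤ W x y) (hQ : ∀ x, 0 ≤ Q x) (ρ : ℝ) (x : X) (y : Y) :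
    0 ≤ PXgY W Q ρ x y :=
  div_nonneg (mul_rpow_nonneg hW hQ _ x y) (tiltedSum_nonneg hW hQ ρ y)

lemma PXgY_pos (hW : ∀ x y, 0 ≤ W x y) (hQ : ∀ x, 0 ≤ Q x) (ρ : ℝ) {x : X} {y : Y}
    (hQx : 0 < Q x) (hWxy : 0 < W x y) : 0 < PXgY W Q ρ x y :=
  div_pos (mul_pos hQx (Real.rpow_pos_of_pos hWxy _)) (tiltedSum_pos hW hQ ρ hQx hWxy)

lemma sum_PXgY (W : X → Y → ℝ) (Q : X → ℝ) (ρ : ℝ) (y : Y) :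
    ∑ x, PXgY W Q ρ x y = tiltedSum W Q ρ y / tiltedSum W Q ρ y := by
  simp only [PXgY, tiltedSum, Finset.sum_div]

lemma sum_PXgY_le_one (W : X → Y → ℝ) (Q : X → ℝ) (ρ : ℝ) (y : Y) :
    ∑ x, PXgY W Q ρ x y ≤ 1 :=
  (sum_PXgY W Q ρ y).trans_le (div_self_le_one _)

/-- The tilted information density `log (W(y|x)^{1/(1+ρ)} / ∑ₐ Q(a) W(y|a)^{1/(1+ρ)})`. -/
noncomputable def tiltedInfo (W : X → Y → ℝ) (Q : X → ℝ) (ρ : ℝ) (x : X) (y : Y) : ℝ :=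
  1 / (1 + ρ) * log (W x y) - log (tiltedSum W Q ρ y)

lemma abs_tiltedInfo_sub (hρ : 0 < 1 + ρ) (x₁ x₂ : X) (y : Y) :
    |tiltedInfo W Q ρ x₁ y - tiltedInfo W Q ρ x₂ y|
      = 1 / (1 + ρ) * |log (W x₁ y) - log (W x₂ y)| := by
  rw [tiltedInfo, tiltedInfo, sub_sub_sub_cancel_right, ← mul_sub, abs_mul,
    abs_of_pos (one_div_pos.mpr hρ)]

/-- The correction to the Chernoff bound on the pairwise error probability of `x` given `y`: the
mean, over `z` drawn from the tilted backward channel, of the loss incurred when the likelihood of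
`z` differs from that of `x`. -/
noncomputable def pairwiseFactor (W : X → Y → ℝ) (Q : X → ℝ) (ρ : ℝ) {N : ℕ}
    (x : Fin N → X) (y : Fin N → Y) : ℝ :=
  ∑ z : Fin N → X, (∏ n, PXgY W Q ρ (z n) (y n)) *
    exp (-(1 / (1 + ρ) * |∑ n, log (W (z n) (y n)) - ∑ n, log (W (x n) (y n))|))

lemma prod_mul_exp_eq_exp_mul_prod_PXgY {N : ℕ} {z x : Fin N → X} {y : Fin N → Y}
    (hg : ∀ n, 0 < tiltedSum W Q ρ (y n)) (hz : ∀ n, 0 < W (z n) (y n)) :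
    iidDist Q z * exp (1 / (1 + ρ) *
        (∑ n, log (W (z n) (y n)) - ∑ n, log (W (x n) (y n))))
      = exp (-∑ n, tiltedInfo W Q ρ (x n) (y n)) * ∏ n, PXgY W Q ρ (z n) (y n) := by
  rw [← Finset.sum_sub_distrib, Finset.mul_sum, ← Finset.sum_neg_distrib, exp_sum, exp_sum, iidDist,
    ← Finset.prod_mul_distrib, ← Finset.prod_mul_distrib]
  refine Finset.prod_congr rfl fun n _ => ?_
  change _ = _ * (_ / tiltedSum W Q ρ (y n))
  have hg' := hg n
  rw [Real.rpow_def_of_pos (hz n), tiltedInfo, neg_sub, exp_sub, exp_log hg', mul_sub, exp_sub,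
    mul_comm (log (W (z n) (y n)))]
  field_simp

lemma pairwiseErrorProb_le_exp_mul_pairwiseFactor (hW : ∀ x y, 0 ≤ W x y) (hQ : ∀ x, 0 ≤ Q x)
    {N : ℕ} {x : Fin N → X} {y : Fin N → Y} (hQx : ∀ n, 0 < Q (x n))
    (hWxy : ∀ n, 0 < W (x n) (y n)) :
    pairwiseErrorProb (iidDist Q) (Wn W) x y
      ≤ exp (-∑ n, tiltedInfo W Q ρ (x n) (y n)) * pairwiseFactor W Q ρ x y := by
  rw [pairwiseErrorProb, pairwiseFactor, Finset.mul_sum]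
  refine (Finset.sum_le_sum fun z hz => ?_).trans
    (Finset.sum_le_sum_of_subset_of_nonneg (Finset.filter_subset _ _) fun z _ _ => ?_)
  · have hle : Wn W x y ≤ Wn W z y := (Finset.mem_filter.mp hz).2
    have hx_pos : 0 < Wn W x y := Finset.prod_pos fun n _ => hWxy n
    have hz_ne : ∀ n, W (z n) (y n) ≠ 0 := fun n =>
      Finset.prod_ne_zero_iff.mp (hx_pos.trans_le hle).ne' n (Finset.mem_univ n)
    have hlog : ∑ n, log (W (x n) (y n)) ≤ ∑ n, log (W (z n) (y n)) := by
      rw [← log_prod fun n _ => (hWxy n).ne', ← log_prod fun n _ => hz_ne n]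
      exact log_le_log hx_pos hle
    rw [abs_of_nonneg (sub_nonneg.mpr hlog), ← mul_assoc, ← prod_mul_exp_eq_exp_mul_prod_PXgY
      (fun n => tiltedSum_pos hW hQ ρ (hQx n) (hWxy n))
      (fun n => (hW _ _).lt_of_ne' (hz_ne n)), mul_assoc, ← exp_add, add_neg_cancel, exp_zero,
      mul_one]
  · exact mul_nonneg (exp_pos _).le <| mul_nonneg
      (Finset.prod_nonneg fun n _ => PXgY_nonneg hW hQ ρ _ _) (exp_pos _).le

lemma pairwiseFactor_le_one (hW : ∀ x y, 0 ≤ W x y) (hQ : ∀ x, 0 ≤ Q x) (hρ : 0 < 1 + ρ) {N : ℕ}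
    (x : Fin N → X) (y : Fin N → Y) : pairwiseFactor W Q ρ x y ≤ 1 := by
  calc pairwiseFactor W Q ρ x y
      ≤ ∑ z : Fin N → X, ∏ n, PXgY W Q ρ (z n) (y n) := by
        refine Finset.sum_le_sum fun z _ => mul_le_of_le_one_right
          (Finset.prod_nonneg fun n _ => PXgY_nonneg hW hQ ρ _ _) (Real.exp_le_one_iff.mpr ?_)
        rw [neg_nonpos]
        positivity
    _ = ∏ n, ∑ x, PXgY W Q ρ x (y n) := (Fintype.prod_sum fun n x => PXgY W Q ρ x (y n)).symm
    _ ≤ 1 := Finset.prod_le_one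
        (fun n _ => Finset.sum_nonneg fun x _ => PXgY_nonneg hW hQ ρ _ _)
        fun n _ => sum_PXgY_le_one W Q ρ _

lemma exists_pairwiseFactor_le_div_sqrt_card (hW : ∀ x y, 0 ≤ W x y) (hQ : ∀ x, 0 ≤ Q x)
    (hρ : 0 < 1 + ρ) {x₁ x₂ : X} {y₀ : Y} (hQ₁ : 0 < Q x₁) (hQ₂ : 0 < Q x₂) (hW₁ : 0 < W x₁ y₀)
    (hW₂ : 0 < W x₂ y₀) (hne : log (W x₁ y₀) ≠ log (W x₂ y₀)) :
    ∃ κ : ℝ, 0 < κ ∧ ∀ (N : ℕ) (x : Fin N → X) (y : Fin N → Y), (∃ n, y n = y₀) →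
      pairwiseFactor W Q ρ x y ≤ κ / √(Finset.univ.filter fun n => y n = y₀).card := by
  have hm : 0 < min (PXgY W Q ρ x₁ y₀) (PXgY W Q ρ x₂ y₀) :=
    lt_min (PXgY_pos hW hQ ρ hQ₁ hW₁) (PXgY_pos hW hQ ρ hQ₂ hW₂)
  have hd : 0 < |log (W x₁ y₀) - log (W x₂ y₀)| := abs_pos.mpr (sub_ne_zero.mpr hne)
  refine ⟨_, laplaceConst_pos hm hd (one_div_pos.mpr hρ), fun N x y hy => ?_⟩
  refine sum_pi_mul_exp_neg_abs_sub_le (p := fun n z => PXgY W Q ρ z (y n))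
    (L := fun n z => log (W z (y n))) (u := fun _ => x₁) (v := fun _ => x₂)
    (fun n z => PXgY_nonneg hW hQ ρ _ _) (fun n => sum_PXgY_le_one W Q ρ _)
    (hy.imp fun n hn => Finset.mem_filter.mpr ⟨Finset.mem_univ n, hn⟩) hm hd
    (one_div_pos.mpr hρ) (fun n hn => ?_) _
  simp only [(Finset.mem_filter.mp hn).2]
  exact ⟨min_le_left _ _, min_le_right _ _, trivial⟩

variable [Fintype Y]

/-- The sum inside the logarithm of Gallager's function, `exp (-E_o(ρ, Q))`. -/
noncomputable def gallagerSum (W : X → Y → ℝ) (Q : X → ℝ) (ρ : ℝ) : ℝ :=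
  ∑ y, tiltedSum W Q ρ y ^ (1 + ρ)

lemma IsChannel.isDist (hW : IsChannel W) (x : X) : IsDist (W x) := ⟨hW.1 x, hW.2 x⟩

lemma gallagerSum_pos (hW : IsChannel W) (hQ : IsDist Q) (ρ : ℝ) : 0 < gallagerSum W Q ρ := by
  obtain ⟨x, hx⟩ := hQ.exists_pos
  obtain ⟨y, hy⟩ := (hW.isDist x).exists_pos
  exact Finset.sum_pos' (fun y _ => Real.rpow_nonneg (tiltedSum_nonneg hW.1 hQ.1 ρ y) _)
    ⟨y, Finset.mem_univ y, Real.rpow_pos_of_pos (tiltedSum_pos hW.1 hQ.1 ρ hx hy) _⟩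

lemma Eo_eq_neg_log_gallagerSum (W : X → Y → ℝ) (ρ : ℝ) (Q : X → ℝ) :
    Eo W ρ Q = -log (gallagerSum W Q ρ) := rfl

lemma gallagerSum_eq_exp_neg_Eo (hW : IsChannel W) (hQ : IsDist Q) (ρ : ℝ) :
    gallagerSum W Q ρ = exp (-Eo W ρ Q) := by
  rw [Eo_eq_neg_log_gallagerSum, neg_neg, exp_log (gallagerSum_pos hW hQ ρ)]

lemma fRho_eq_rpow_div (W : X → Y → ℝ) (Q : X → ℝ) (ρ : ℝ) (y : Y) :
    fRho W Q ρ y = tiltedSum W Q ρ y ^ (1 + ρ) / gallagerSum W Q ρ := rfl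

lemma PXY_pos (hW : IsChannel W) (hQ : IsDist Q) (ρ : ℝ) {x : X} {y : Y}
    (hQx : 0 < Q x) (hWxy : 0 < W x y) : 0 < PXY W Q ρ x y :=
  mul_pos (PXgY_pos hW.1 hQ.1 ρ hQx hWxy) <| div_pos
    (Real.rpow_pos_of_pos (tiltedSum_pos hW.1 hQ.1 ρ hQx hWxy) _) (gallagerSum_pos hW hQ ρ)

lemma sum_PXY (hρ : 1 + ρ ≠ 0) (y : Y) : ∑ x, PXY W Q ρ x y = fRho W Q ρ y := by
  simp only [PXY]
  rw [← Finset.sum_mul, sum_PXgY, fRho_eq_rpow_div]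
  rcases eq_or_ne (tiltedSum W Q ρ y) 0 with h | h
  · simp [h, hρ]
  · rw [div_self h, one_mul]

lemma isDist_PXY (hW : IsChannel W) (hQ : IsDist Q) (hρ : 1 + ρ ≠ 0) :
    IsDist (Function.uncurry (PXY W Q ρ)) := by
  constructor
  · rintro ⟨x, y⟩
    exact mul_nonneg (PXgY_nonneg hW.1 hQ.1 ρ x y) <| div_nonneg
      (Real.rpow_nonneg (tiltedSum_nonneg hW.1 hQ.1 ρ y) _) (gallagerSum_pos hW hQ ρ).le
  · rw [Fintype.sum_prod_type_right]
    simp only [Function.uncurry_apply_pair, sum_PXY hρ, fRho_eq_rpow_div]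
    rw [← Finset.sum_div]
    exact div_self (gallagerSum_pos hW hQ ρ).ne'

lemma mul_exp_neg_mul_tiltedInfo (hW : IsChannel W) (hQ : IsDist Q) (hρ : 0 < 1 + ρ) (x : X)
    (y : Y) :
    Q x * W x y * exp (-(ρ * tiltedInfo W Q ρ x y)) = gallagerSum W Q ρ * PXY W Q ρ x y := by
  have hS := (gallagerSum_pos hW hQ ρ).ne'
  rw [PXY, fRho_eq_rpow_div, PXgY]
  change _ = _ * (_ / tiltedSum W Q ρ y * _)
  rcases (hQ.1 x).eq_or_lt with hQx | hQx
  · simp [← hQx]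
  rcases (hW.1 x y).eq_or_lt with hWxy | hWxy
  · simp [← hWxy, hρ.ne']
  have hg := tiltedSum_pos hW.1 hQ.1 ρ hQx hWxy
  have hexp : exp (-(ρ * tiltedInfo W Q ρ x y))
      = W x y ^ (1 / (1 + ρ) - 1) * tiltedSum W Q ρ y ^ ρ := by
    rw [Real.rpow_def_of_pos hWxy, Real.rpow_def_of_pos hg, ← exp_add, tiltedInfo]
    congr 1
    field_simp
    ring
  rw [hexp, Real.rpow_sub_one hWxy.ne', Real.rpow_one_add' hg.le hρ.ne']
  field_simp

lemma iidDist_mul_Wn_mul_exp_neg (hW : IsChannel W) (hQ : IsDist Q) (hρ : 0 < 1 + ρ) {N : ℕ}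
    (x : Fin N → X) (y : Fin N → Y) :
    iidDist Q x * Wn W x y * exp (-(ρ * ∑ n, tiltedInfo W Q ρ (x n) (y n)))
      = exp (-(N * Eo W ρ Q)) * ∏ n, PXY W Q ρ (x n) (y n) := by
  rw [Finset.mul_sum, ← Finset.sum_neg_distrib, exp_sum, iidDist, Wn, ← Finset.prod_mul_distrib,
    ← Finset.prod_mul_distrib]
  simp only [mul_exp_neg_mul_tiltedInfo hW hQ hρ]
  rw [Finset.prod_mul_distrib, Finset.prod_const, Finset.card_univ, Fintype.card_fin,
    gallagerSum_eq_exp_neg_Eo hW hQ, ← Real.exp_nat_mul, mul_neg]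

lemma iidDist_mul_Wn_mul_min_one_le (hW : IsChannel W) (hQ : IsDist Q) (hρ : 0 < 1 + ρ) {N : ℕ}
    (x : Fin N → X) (y : Fin N → Y) {M B : ℝ} (hM : 0 < M) (hB : 0 < B)
    (hF : pairwiseFactor W Q ρ x y ≤ B) :
    iidDist Q x * Wn W x y * min 1 (M * pairwiseErrorProb (iidDist Q) (Wn W) x y)
      ≤ exp (-(N * Eo W ρ Q)) * (M * B) ^ ρ * ((∏ n, PXY W Q ρ (x n) (y n)) *
        exp (-(min ρ (1 - ρ) * |∑ n, tiltedInfo W Q ρ (x n) (y n) - log (M * B)|))) := by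
  have hQW : 0 ≤ iidDist Q x * Wn W x y :=
    mul_nonneg (iidDist_nonneg hQ.1 x) (Finset.prod_nonneg fun n _ => hW.1 _ _)
  set T := ∑ n, tiltedInfo W Q ρ (x n) (y n)
  have htilt : iidDist Q x * Wn W x y * exp (-(ρ * T))
      = exp (-(N * Eo W ρ Q)) * ∏ n, PXY W Q ρ (x n) (y n) :=
    iidDist_mul_Wn_mul_exp_neg hW hQ hρ x y
  rcases hQW.eq_or_lt with h0 | hpos
  · rw [← h0, zero_mul] at htilt ⊢
    rw [mul_right_comm, ← mul_assoc, ← htilt]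
    simp
  have hne := hpos.ne'
  rw [iidDist, Wn, ← Finset.prod_mul_distrib, Finset.prod_ne_zero_iff] at hne
  have hpair := pairwiseErrorProb_le_exp_mul_pairwiseFactor (ρ := ρ) (x := x) (y := y) hW.1 hQ.1
    (fun n => (hQ.1 _).lt_of_ne' (left_ne_zero_of_mul (hne n (Finset.mem_univ n))))
    fun n => (hW.1 _ _).lt_of_ne' (right_ne_zero_of_mul (hne n (Finset.mem_univ n)))
  have hmin : min 1 (M * pairwiseErrorProb (iidDist Q) (Wn W) x y)
      ≤ (M * B) ^ ρ * exp (-(ρ * T)) * exp (-(min ρ (1 - ρ) * |T - log (M * B)|)) :=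
    calc _ ≤ min 1 (M * B * exp (-T)) := by
          refine min_le_min_left 1 ?_
          rw [mul_assoc, mul_comm B]
          exact mul_le_mul_of_nonneg_left
            (hpair.trans (mul_le_mul_of_nonneg_left hF (exp_pos _).le)) hM.le
      _ ≤ _ := min_one_le_rpow_mul_exp (ρ := ρ) (by positivity)
      _ = _ := by
          rw [Real.mul_rpow (by positivity) (exp_pos _).le, ← Real.exp_mul,
            log_mul (by positivity) (exp_pos _).ne', log_exp, abs_sub_comm T]
          ring_nf
  refine (mul_le_mul_of_nonneg_left hmin hQW).trans_eq ?_
  linear_combination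
    (M * B) ^ ρ * exp (-(min ρ (1 - ρ) * |T - log (M * B)|)) * htilt

lemma rcuBound_eq_sum_pi_prod (W : X → Y → ℝ) (Q : X → ℝ) (N : ℕ) (M : ℝ) :
    rcuBound (iidDist Q) (Wn W (N := N)) M = ∑ ω : Fin N → X × Y,
      iidDist Q (fun n => (ω n).1) * Wn W (fun n => (ω n).1) (fun n => (ω n).2) *
        min 1 (M * pairwiseErrorProb (iidDist Q) (Wn W) (fun n => (ω n).1) fun n => (ω n).2) := by
  rw [← (Equiv.arrowProdEquivProdArrow (Fin N) (fun _ => X) (fun _ => Y)).symm.sum_comp,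
    Fintype.sum_prod_type]
  simp only [rcuBound, Finset.mul_sum, ← mul_assoc]
  rfl

lemma rcuBound_le_of_pairwiseFactor_le (hW : IsChannel W) (hQ : IsDist Q) (hρ₀ : 0 ≤ ρ)
    (hρ₁ : ρ ≤ 1) {N : ℕ} {M B : ℝ} (hM : 0 < M) (hB : 0 < B) (good : (Fin N → X × Y) → Prop)
    (hgood : ∀ ω, good ω → pairwiseFactor W Q ρ (fun n => (ω n).1) (fun n => (ω n).2) ≤ B) :
    rcuBound (iidDist Q) (Wn W (N := N)) M ≤ exp (-(N * Eo W ρ Q)) * M ^ ρ *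
      (B ^ ρ * ∑ ω : Fin N → X × Y, (∏ n, Function.uncurry (PXY W Q ρ) (ω n)) *
          exp (-(min ρ (1 - ρ) *
            |∑ n, Function.uncurry (tiltedInfo W Q ρ) (ω n) - log (M * B)|))
        + ∑ ω with ¬ good ω, iidDist (Function.uncurry (PXY W Q ρ)) ω) := by
  have hρ : 0 < 1 + ρ := by linarith
  have hP : ∀ ω : Fin N → X × Y, 0 ≤ iidDist (Function.uncurry (PXY W Q ρ)) ω :=
    iidDist_nonneg (isDist_PXY hW hQ hρ.ne').1
  rw [rcuBound_eq_sum_pi_prod, Finset.sum_filter, mul_add, Finset.mul_sum, Finset.mul_sum,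
    Finset.mul_sum, ← Finset.sum_add_distrib]
  refine Finset.sum_le_sum fun ω _ => ?_
  by_cases hω : good ω
  · refine (iidDist_mul_Wn_mul_min_one_le hW hQ hρ _ _ hM hB (hgood ω hω)).trans_eq ?_
    rw [if_neg (not_not.mpr hω), Real.mul_rpow hM.le hB.le]
    simp only [Function.uncurry]
    ring
  · refine (iidDist_mul_Wn_mul_min_one_le hW hQ hρ _ _ hM one_pos
      (pairwiseFactor_le_one hW.1 hQ.1 hρ _ _)).trans ?_
    rw [if_pos hω, mul_one]
    refine le_add_of_nonneg_of_le ?_ (mul_le_mul_of_nonneg_left ?_ (by positivity))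
    · exact mul_nonneg (by positivity) <| mul_nonneg (by positivity) <|
        mul_nonneg (hP ω) (exp_pos _).le
    · refine mul_le_of_le_one_right (hP ω) (Real.exp_le_one_iff.mpr ?_)
      rw [neg_nonpos]
      exact mul_nonneg (le_min hρ₀ (by linarith)) (abs_nonneg _)

lemma exists_sum_PXY_mul_exp_le (hW : IsChannel W) (hQ : IsDist Q) (hρ : 0 < 1 + ρ)
    {x₁ x₂ : X} {y₀ : Y} (hQ₁ : 0 < Q x₁) (hQ₂ : 0 < Q x₂) (hW₁ : 0 < W x₁ y₀)
    (hW₂ : 0 < W x₂ y₀) (hne : log (W x₁ y₀) ≠ log (W x₂ y₀)) {c : ℝ} (hc : 0 < c) :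
    ∃ κ : ℝ, 0 < κ ∧ ∀ N : ℕ, 0 < N → ∀ a : ℝ,
      ∑ ω : Fin N → X × Y, (∏ n, Function.uncurry (PXY W Q ρ) (ω n)) *
        exp (-(c * |∑ n, Function.uncurry (tiltedInfo W Q ρ) (ω n) - a|)) ≤ κ / √N := by
  have hm : 0 < min (PXY W Q ρ x₁ y₀) (PXY W Q ρ x₂ y₀) :=
    lt_min (PXY_pos hW hQ ρ hQ₁ hW₁) (PXY_pos hW hQ ρ hQ₂ hW₂)
  have hd : 0 < 1 / (1 + ρ) * |log (W x₁ y₀) - log (W x₂ y₀)| :=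
    mul_pos (one_div_pos.mpr hρ) (abs_pos.mpr (sub_ne_zero.mpr hne))
  have hP := isDist_PXY hW hQ hρ.ne'
  refine ⟨_, laplaceConst_pos hm hd hc, fun N hN a => ?_⟩
  have : Nonempty (Fin N) := ⟨⟨0, hN⟩⟩
  simpa only [Finset.card_univ, Fintype.card_fin] using sum_pi_mul_exp_neg_abs_sub_le
    (u := fun _ : Fin N => (x₁, y₀)) (v := fun _ => (x₂, y₀)) (fun _ => hP.1)
    (fun _ => hP.2.le) Finset.univ_nonempty hm hd hc
    (fun _ _ => ⟨min_le_left _ _, min_le_right _ _, abs_tiltedInfo_sub hρ x₁ x₂ y₀⟩) a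

lemma exists_sum_PXY_card_lt_le_exp (hW : IsChannel W) (hQ : IsDist Q) (hρ : 1 + ρ ≠ 0)
    {x₀ : X} {y₀ : Y} (hQx : 0 < Q x₀) (hWxy : 0 < W x₀ y₀) :
    ∃ q : ℝ, 0 < q ∧ ∀ N : ℕ, ∑ ω : Fin N → X × Y with
      ((Finset.univ.filter fun n => (ω n).2 = y₀).card : ℝ) < q * N,
      iidDist (Function.uncurry (PXY W Q ρ)) ω ≤ exp (-(q * N)) := by
  have hP := isDist_PXY hW hQ hρ
  refine ⟨(∑ ω with ω.2 = y₀, Function.uncurry (PXY W Q ρ) ω) / 4, div_pos (Finset.sum_pos'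
    (fun ω _ => hP.1 ω) ⟨(x₀, y₀), by simp, PXY_pos hW hQ ρ hQx hWxy⟩) four_pos, fun N => ?_⟩
  simpa only [Fintype.card_fin] using
    sum_iidDist_card_lt_le_exp (ι := Fin N) hP fun ω => ω.2 = y₀

theorem exists_rcuBound_iidDist_le (hW : IsChannel W) (hQ : IsDist Q) (hns : ¬ Singular W Q)
    (hρ₀ : 0 < ρ) (hρ₁ : ρ < 1) :
    ∃ K : ℝ, 0 < K ∧ ∀ N : ℕ, 0 < N → ∀ M : ℝ, 0 < M →
      rcuBound (iidDist Q) (Wn W (N := N)) M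
        ≤ K * (N : ℝ) ^ (-(1 + ρ) / 2) * M ^ ρ * exp (-(N * Eo W ρ Q)) := by
  have hρ : 0 < 1 + ρ := by linarith
  obtain ⟨x₁, x₂, y₀, hQ₁, hQ₂, hW₁, hW₂, hne⟩ := exists_of_not_singular hW.1 hQ.1 hns
  obtain ⟨κ₁, hκ₁, hfactor⟩ :=
    exists_pairwiseFactor_le_div_sqrt_card hW.1 hQ.1 hρ hQ₁ hQ₂ hW₁ hW₂ hne
  obtain ⟨κ₂, hκ₂, hinfo⟩ := exists_sum_PXY_mul_exp_le hW hQ hρ hQ₁ hQ₂ hW₁ hW₂ hne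
    (lt_min hρ₀ (sub_pos.mpr hρ₁))
  obtain ⟨q, hq, hrare⟩ := exists_sum_PXY_card_lt_le_exp hW hQ hρ.ne' hQ₁ hW₁
  refine ⟨(κ₁ / √q) ^ ρ * κ₂ + 1 / q, by positivity, fun N hN M hM => ?_⟩
  have hN0 : (0 : ℝ) < N := by exact_mod_cast hN
  have hbound := rcuBound_le_of_pairwiseFactor_le hW hQ hρ₀.le hρ₁.le (N := N) hM
    (B := κ₁ / √q / √N) (by positivity)
    (fun ω => q * N ≤ (Finset.univ.filter fun n => (ω n).2 = y₀).card) fun ω hω => by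
      have hcard : (0 : ℝ) < (Finset.univ.filter fun n => (ω n).2 = y₀).card :=
        (mul_pos hq hN0).trans_le hω
      obtain ⟨n, hn⟩ := Finset.card_pos.mp (Nat.cast_pos.mp hcard)
      refine (hfactor N _ _ ⟨n, (Finset.mem_filter.mp hn).2⟩).trans ?_
      rw [div_div, ← Real.sqrt_mul hq.le]
      gcongr
  have hrare_le := (hrare N).trans
    (exp_neg_mul_le_rpow_div (r := -(1 + ρ) / 2) hq (by linarith) (by exact_mod_cast hN))
  simp only [not_le] at hbound
  calc _ ≤ _ := hbound
    _ ≤ exp (-(N * Eo W ρ Q)) * M ^ ρ *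
        ((κ₁ / √q / √N) ^ ρ * (κ₂ / √N) + (N : ℝ) ^ (-(1 + ρ) / 2) / q) := by
        gcongr
        exact hinfo N hN _
    _ = _ := by
        rw [div_sqrt_rpow_mul_div_sqrt (by positivity) hN0]
        ring

end Tilting

section Exponents

variable {X Y : Type*} [Fintype X] {W : X → Y → ℝ} {Q : X → ℝ} {R ρ : ℝ}

lemma tiltedSum_zero (W : X → Y → ℝ) (Q : X → ℝ) (y : Y) :
    tiltedSum W Q 0 y = ∑ x, Q x * W x y := by
  simp [tiltedSum]

lemma tiltedSum_eq_zero (hρ : 0 < 1 + ρ) {y : Y} (h : ∀ x, Q x * W x y = 0) :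
    tiltedSum W Q ρ y = 0 := by
  refine Finset.sum_eq_zero fun x _ => ?_
  rcases mul_eq_zero.mp (h x) with h | h
  · rw [h, zero_mul]
  · rw [h, Real.zero_rpow (one_div_pos.mpr hρ).ne', mul_zero]

lemma hasDerivAt_rpow_one_div {w : ℝ} (hw : 0 ≤ w) :
    HasDerivAt (fun ρ : ℝ => w ^ (1 / (1 + ρ))) (-(w * log w)) 0 := by
  rcases hw.eq_or_lt with rfl | hw
  · have heq : (fun ρ : ℝ => (0 : ℝ) ^ (1 / (1 + ρ))) =ᶠ[nhds 0] fun _ => 0 := by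
      filter_upwards [lt_mem_nhds (show (-1 : ℝ) < 0 by norm_num)] with ρ hρ
      exact Real.zero_rpow (one_div_pos.mpr (by linarith)).ne'
    simpa using (hasDerivAt_const (0 : ℝ) (0 : ℝ)).congr_of_eventuallyEq heq
  · have hinv : HasDerivAt (fun ρ : ℝ => 1 / (1 + ρ)) (-1) 0 := by
      simpa using ((hasDerivAt_id' (0 : ℝ)).const_add 1).fun_inv (by norm_num)
    simpa [mul_comm] using hinv.const_rpow hw

lemma hasDerivAt_tiltedSum (hW : ∀ x y, 0 ≤ W x y) (Q : X → ℝ) (y : Y) :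
    HasDerivAt (fun ρ => tiltedSum W Q ρ y) (∑ x, Q x * -(W x y * log (W x y))) 0 :=
  HasDerivAt.fun_sum fun x _ => (hasDerivAt_rpow_one_div (hW x y)).const_mul (Q x)

lemma hasDerivAt_tiltedSum_rpow (hW : ∀ x y, 0 ≤ W x y) (hQ : ∀ x, 0 ≤ Q x) (y : Y) :
    HasDerivAt (fun ρ => tiltedSum W Q ρ y ^ (1 + ρ))
      (-∑ x, Q x * W x y * log (W x y / ∑ a, Q a * W a y)) 0 := by
  by_cases hzero : ∀ x, Q x * W x y = 0
  · have heq : (fun ρ => tiltedSum W Q ρ y ^ (1 + ρ)) =ᶠ[nhds 0] fun _ => 0 := by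
      filter_upwards [lt_mem_nhds (show (-1 : ℝ) < 0 by norm_num)] with ρ hρ
      rw [tiltedSum_eq_zero (by linarith) hzero, Real.zero_rpow (by linarith)]
    simpa [hzero] using (hasDerivAt_const (0 : ℝ) (0 : ℝ)).congr_of_eventuallyEq heq
  · have hg : tiltedSum W Q 0 y ≠ 0 := by
      rw [tiltedSum_zero]
      push Not at hzero
      obtain ⟨x, hx⟩ := hzero
      exact (Finset.sum_pos' (fun x _ => mul_nonneg (hQ x) (hW x y))
        ⟨x, Finset.mem_univ x, (mul_nonneg (hQ x) (hW x y)).lt_of_ne' hx⟩).ne'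
    refine ((hasDerivAt_tiltedSum hW Q y).rpow ((hasDerivAt_id' (0 : ℝ)).const_add 1)
      ((tiltedSum_nonneg hW hQ 0 y).lt_of_ne' hg)).congr_deriv ?_
    simp only [add_zero, Real.rpow_one, mul_one, sub_self, Real.rpow_zero, one_mul]
    rw [← tiltedSum_zero]
    nth_rewrite 1 [tiltedSum_zero]
    rw [Finset.sum_mul, ← Finset.sum_add_distrib, ← Finset.sum_neg_distrib]
    refine Fintype.sum_congr _ _ fun x => ?_
    rcases eq_or_ne (W x y) 0 with h0 | h0
    · simp [h0]
    · rw [log_div h0 hg]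
      ring

variable [Fintype Y]

lemma sum_tiltedSum_zero (hW : IsChannel W) (hQ : IsDist Q) : ∑ y, tiltedSum W Q 0 y = 1 := by
  simp only [tiltedSum_zero]
  rw [Finset.sum_comm]
  simp only [← Finset.mul_sum, hW.2, mul_one, hQ.2]

lemma gallagerSum_zero (hW : IsChannel W) (hQ : IsDist Q) : gallagerSum W Q 0 = 1 := by
  simp only [gallagerSum, add_zero, Real.rpow_one, sum_tiltedSum_zero hW hQ]

lemma Eo_zero (hW : IsChannel W) (hQ : IsDist Q) : Eo W 0 Q = 0 := by
  rw [Eo_eq_neg_log_gallagerSum, gallagerSum_zero hW hQ, log_one, neg_zero]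

lemma tiltedSum_zero_le (hW : IsChannel W) (hQ : IsDist Q) (hρ : 0 ≤ ρ) (y : Y) :
    tiltedSum W Q 0 y ≤ tiltedSum W Q ρ y := by
  rw [tiltedSum_zero]
  refine Finset.sum_le_sum fun x _ => mul_le_mul_of_nonneg_left ?_ (hQ.1 x)
  have hWle : W x y ≤ 1 :=
    (hW.2 x).symm ▸ Finset.single_le_sum (fun y _ => hW.1 x y) (Finset.mem_univ y)
  exact Real.self_le_rpow_of_le_one (hW.1 x y) hWle (div_le_one_of_le₀ (by linarith) (by linarith))

lemma one_le_card_rpow_mul_gallagerSum (hW : IsChannel W) (hQ : IsDist Q) (hρ : 0 ≤ ρ) :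
    1 ≤ (Fintype.card Y : ℝ) ^ ρ * gallagerSum W Q ρ := by
  have hsum : 1 ≤ ∑ y, |tiltedSum W Q ρ y| := by
    rw [← sum_tiltedSum_zero hW hQ]
    exact Finset.sum_le_sum fun y _ => (tiltedSum_zero_le hW hQ hρ y).trans (le_abs_self _)
  calc (1 : ℝ) ≤ (∑ y, |tiltedSum W Q ρ y|) ^ (1 + ρ) := Real.one_le_rpow hsum (by linarith)
    _ ≤ (Fintype.card Y : ℝ) ^ (1 + ρ - 1) * ∑ y, |tiltedSum W Q ρ y| ^ (1 + ρ) :=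
        Real.rpow_sum_le_const_mul_sum_rpow _ _ (by linarith)
    _ = (Fintype.card Y : ℝ) ^ ρ * gallagerSum W Q ρ := by
        simp only [gallagerSum, abs_of_nonneg (tiltedSum_nonneg hW.1 hQ.1 ρ _),
          add_sub_cancel_left]

lemma Eo_le_mul_log_card (hW : IsChannel W) (hQ : IsDist Q) (hρ : 0 ≤ ρ) :
    Eo W ρ Q ≤ ρ * log (Fintype.card Y) := by
  obtain ⟨x, -⟩ := hQ.exists_pos
  obtain ⟨y, -⟩ := (hW.isDist x).exists_pos
  have hY : (0 : ℝ) < Fintype.card Y := Nat.cast_pos.mpr (Fintype.card_pos_iff.mpr ⟨y⟩)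
  have hlog := Real.log_nonneg (one_le_card_rpow_mul_gallagerSum hW hQ hρ)
  rw [log_mul (Real.rpow_pos_of_pos hY ρ).ne' (gallagerSum_pos hW hQ ρ).ne',
    Real.log_rpow hY] at hlog
  rw [Eo_eq_neg_log_gallagerSum]
  linarith

lemma continuousOn_Eo (hW : IsChannel W) (hQ : IsDist Q) :
    ContinuousOn (fun ρ => Eo W ρ Q) (Set.Ioi (-1)) := by
  have hpos : ∀ ρ ∈ Set.Ioi (-1 : ℝ), 0 < 1 + ρ := fun ρ hρ => by
    linarith [Set.mem_Ioi.mp hρ]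
  refine (ContinuousOn.log ?_ fun ρ _ => (gallagerSum_pos hW hQ ρ).ne').neg
  refine continuousOn_finsetSum _ fun y _ => ContinuousOn.rpow ?_ (by fun_prop)
    fun ρ hρ => Or.inr (hpos ρ hρ)
  refine continuousOn_finsetSum _ fun x _ => continuousOn_const.mul ?_
  exact continuousOn_const.rpow
    (continuousOn_const.div (by fun_prop) fun ρ hρ => (hpos ρ hρ).ne')
    fun ρ hρ => Or.inr (one_div_pos.mpr (hpos ρ hρ))

lemma continuousOn_neg_mul_add_Eo (hW : IsChannel W) (hQ : IsDist Q) (R : ℝ) :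
    ContinuousOn (fun ρ => -ρ * R + Eo W ρ Q) (Set.Icc 0 1) :=
  ContinuousOn.add (by fun_prop) <| (continuousOn_Eo hW hQ).mono fun _ hρ =>
    Set.mem_Ioi.mpr (by linarith [hρ.1])

lemma le_ErQ (hW : IsChannel W) (hQ : IsDist Q) (R : ℝ) (hρ : ρ ∈ Set.Icc (0 : ℝ) 1) :
    -ρ * R + Eo W ρ Q ≤ ErQ W R Q :=
  le_csSup (isCompact_Icc.image_of_continuousOn (continuousOn_neg_mul_add_Eo hW hQ R)).bddAbove
    (Set.mem_image_of_mem _ hρ)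

lemma exists_ErQ_eq (hW : IsChannel W) (hQ : IsDist Q) (R : ℝ) :
    ∃ ρ ∈ Set.Icc (0 : ℝ) 1, ErQ W R Q = -ρ * R + Eo W ρ Q := by
  obtain ⟨ρ, hρ, h⟩ :=
    (isCompact_Icc.image_of_continuousOn (continuousOn_neg_mul_add_Eo hW hQ R)).sSup_mem
      ((Set.nonempty_Icc.mpr zero_le_one).image _)
  exact ⟨ρ, hρ, h.symm⟩

lemma ErQ_nonneg (hW : IsChannel W) (hQ : IsDist Q) (R : ℝ) : 0 ≤ ErQ W R Q := by
  simpa [Eo_zero hW hQ] using le_ErQ hW hQ R (ρ := 0) (by simp)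

lemma ErQ_le_Er (hW : IsChannel W) (hQ : IsDist Q) (R : ℝ) : ErQ W R Q ≤ Er W R := by
  refine le_csSup ⟨|log (Fintype.card Y) - R|, ?_⟩ ⟨Q, hQ, rfl⟩
  rintro _ ⟨Q', hQ', rfl⟩
  obtain ⟨ρ, hρ, h⟩ := exists_ErQ_eq hW hQ' R
  calc ErQ W R Q' ≤ ρ * (log (Fintype.card Y) - R) := by
        linarith [Eo_le_mul_log_card hW hQ' hρ.1]
    _ ≤ ρ * |log (Fintype.card Y) - R| := mul_le_mul_of_nonneg_left (le_abs_self _) hρ.1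
    _ ≤ |log (Fintype.card Y) - R| := mul_le_of_le_one_left (abs_nonneg _) hρ.2

lemma Er_nonneg (hW : IsChannel W) (R : ℝ) : 0 ≤ Er W R := by
  refine Real.sSup_nonneg ?_
  rintro _ ⟨Q, hQ, rfl⟩
  exact ErQ_nonneg hW hQ R

lemma isLUB_Eo_one (hW : IsChannel W) (hQ : IsDist Q) (h : Er W R = -1 * R + Eo W 1 Q) :
    IsLUB {v : ℝ | ∃ Q : X → ℝ, IsDist Q ∧ v = Eo W 1 Q} (Eo W 1 Q) := by
  refine IsGreatest.isLUB ⟨⟨Q, hQ, rfl⟩, ?_⟩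
  rintro _ ⟨Q', hQ', rfl⟩
  linarith [(le_ErQ hW hQ' R (ρ := 1) (by simp)).trans (ErQ_le_Er hW hQ' R)]

lemma le_Rcr (hW : IsChannel W) (hQ : IsDist Q) (h : Er W R = -1 * R + Eo W 1 Q) :
    R ≤ Rcr W := by
  have hsup := (isLUB_Eo_one hW hQ h).csSup_eq ⟨_, Q, hQ, rfl⟩
  rw [Rcr, hsup]
  refine le_csSup ⟨Eo W 1 Q, fun R' hR' => ?_⟩ ?_
  · rw [Set.mem_ofPred_eq] at hR'
    linarith [Er_nonneg hW R']
  · rw [Set.mem_ofPred_eq]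
    linarith

lemma hasDerivAt_Eo_zero (hW : IsChannel W) (hQ : IsDist Q) :
    HasDerivAt (fun ρ => Eo W ρ Q) (MI W Q) 0 := by
  have hsum : HasDerivAt (gallagerSum W Q) (-MI W Q) 0 := by
    rw [MI, Finset.sum_comm, ← Finset.sum_neg_distrib]
    exact HasDerivAt.fun_sum fun y _ => hasDerivAt_tiltedSum_rpow hW.1 hQ.1 y
  refine (hsum.log (gallagerSum_pos hW hQ 0).ne').neg.congr_deriv ?_
  rw [gallagerSum_zero hW hQ, div_one, neg_neg]

lemma isDist_single [DecidableEq X] (x : X) : IsDist (Pi.single x (1 : ℝ) : X → ℝ) :=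
  ⟨fun a => (Pi.single_nonneg.mpr zero_le_one : (0 : X → ℝ) ≤ Pi.single x 1) a, by simp⟩

lemma Er_pos_of_lt_capacity [Nonempty X] (hW : IsChannel W) (hR : R < Capacity W) :
    0 < Er W R := by
  have hne : {v : ℝ | ∃ Q : X → ℝ, IsDist Q ∧ v = MI W Q}.Nonempty :=
    ⟨_, _, isDist_single (Classical.arbitrary X), rfl⟩
  obtain ⟨_, ⟨Q, hQ, rfl⟩, hlt⟩ := exists_lt_of_lt_csSup hne hR
  have hderiv : HasDerivAt (fun ρ => -ρ * R + Eo W ρ Q) (-1 * R + MI W Q) 0 :=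
    ((hasDerivAt_id (0 : ℝ)).neg.mul_const R).add (hasDerivAt_Eo_zero hW hQ)
  by_contra! hle
  have hmax : IsLocalMaxOn (fun ρ => -ρ * R + Eo W ρ Q) (Set.Icc 0 1) 0 := by
    filter_upwards [self_mem_nhdsWithin] with ρ hρ
    simpa [Eo_zero hW hQ] using ((le_ErQ hW hQ R hρ).trans (ErQ_le_Er hW hQ R)).trans hle
  have hnonpos := hmax.hasFDerivWithinAt_nonpos hderiv.hasFDerivAt.hasFDerivWithinAt
    (y := 1) (mem_posTangentConeAt_of_segment_subset (by simp [segment_eq_Icc]))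
  simp only [ContinuousLinearMap.toSpanSingleton_apply, smul_eq_mul, one_mul] at hnonpos
  linarith

lemma exists_mem_Ioo_Er_eq [Nonempty X] (hW : IsChannel W) (hQ : IsDist Q) (hR₁ : Rcr W < R)
    (hR₂ : R < Capacity W) (hE : ErQ W R Q = Er W R) :
    ∃ ρ ∈ Set.Ioo (0 : ℝ) 1, Er W R = -ρ * R + Eo W ρ Q := by
  obtain ⟨ρ, hρ, hmax⟩ := exists_ErQ_eq hW hQ R
  rw [hE] at hmax
  refine ⟨ρ, ⟨hρ.1.lt_of_ne' ?_, hρ.2.lt_of_ne ?_⟩, hmax⟩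
  · rintro rfl
    have hpos := Er_pos_of_lt_capacity hW hR₂
    rw [hmax, Eo_zero hW hQ] at hpos
    simp at hpos
  · rintro rfl
    exact hR₁.not_ge (le_Rcr hW hQ hmax)

-- By the envelope argument this is an equality where `E_r(·, Q)` is differentiable; elsewhere
-- `deriv` is `0`.
lemma rhoStarQ_le (hW : IsChannel W) (hQ : IsDist Q) (hρ : ρ ∈ Set.Icc (0 : ℝ) 1)
    (h : ErQ W R Q = -ρ * R + Eo W ρ Q) : rhoStarQ W Q R ≤ ρ := by
  by_cases hdiff : DifferentiableAt ℝ (fun a => ErQ W a Q) R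
  · have hmin : IsLocalMin (fun a => ErQ W a Q + a * ρ) R := by
      refine Filter.Eventually.of_forall fun a => ?_
      simp only [h]
      linarith [le_ErQ hW hQ a hρ]
    have hzero := hmin.hasDerivAt_eq_zero
      (hdiff.hasDerivAt.add ((hasDerivAt_id R).mul_const ρ))
    rw [rhoStarQ]
    linarith
  · rw [rhoStarQ, deriv_zero_of_not_differentiableAt hdiff, neg_zero]
    exact hρ.1

end Exponents

section Codes

variable {N : ℕ} {R : ℝ}

lemma nMsgs_pos (N : ℕ) (R : ℝ) : 0 < nMsgs N R := Nat.ceil_pos.mpr (exp_pos _)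

lemma nMsgs_le_two_mul_exp (hR : 0 ≤ R) : (nMsgs N R : ℝ) ≤ 2 * exp (N * R) := by
  have hexp : (1 : ℝ) ≤ exp (N * R) := Real.one_le_exp (by positivity)
  have hceil : (nMsgs N R : ℝ) < exp (N * R) + 1 := Nat.ceil_lt_add_one (exp_pos _).le
  linarith

lemma nMsgs_eq_one (hR : R ≤ 0) : nMsgs N R = 1 := by
  refine le_antisymm (Nat.ceil_le.mpr ?_) (nMsgs_pos N R)
  simpa using mul_nonpos_of_nonneg_of_nonpos (Nat.cast_nonneg N) hR

variable {X Y : Type*} [Fintype X] [Fintype Y] {W : X → Y → ℝ}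

lemma Pmax_eq_zero {M : ℕ} [Subsingleton (Fin M)] (W : X → Y → ℝ) (f : Fin M → Fin N → X)
    (φ : (Fin N → Y) → Fin M) : Pmax W f φ = 0 := by
  have hzero : ∀ m, ∑ y, Wn W (f m) y * (if φ y ≠ m then (1 : ℝ) else 0) = 0 := fun m =>
    Finset.sum_eq_zero fun y _ => by rw [if_neg (not_not.mpr (Subsingleton.elim _ _)), mul_zero]
  simp only [Pmax, hzero, Real.iSup_const_zero]

lemma exists_code_Pmax_le_rcuBound (hW : IsChannel W) {Q : X → ℝ} (hQ : IsDist Q) (N : ℕ)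
    {M : ℕ} (hM : 0 < M) : ∃ (f : Fin M → Fin N → X) (φ : (Fin N → Y) → Fin M),
      Pmax W f φ ≤ 2 * rcuBound (iidDist Q) (Wn W (N := N)) (2 * M) := by
  have : Nonempty (Fin M) := ⟨⟨0, hM⟩⟩
  obtain ⟨f, φ, hfφ⟩ := exists_code_errorProb_le_rcuBound (V := Wn W (N := N)) (isDist_iidDist hQ)
    (fun x y => Finset.prod_nonneg fun n _ => hW.1 _ _) hM
  refine ⟨f, φ, ciSup_le fun m => ?_⟩
  simpa only [Finset.sum_filter, mul_ite, mul_one, mul_zero] using hfφ m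

theorem exists_code_Pmax_le_rpow_mul_exp (hW : IsChannel W) {Q : X → ℝ} (hQ : IsDist Q)
    (hns : ¬ Singular W Q) {ρ : ℝ} (hρ₀ : 0 < ρ) (hρ₁ : ρ < 1) (R : ℝ) :
    ∃ K : ℝ, 0 < K ∧ ∀ N : ℕ, 0 < N →
      ∃ (f : Fin (nMsgs N R) → Fin N → X) (φ : (Fin N → Y) → Fin (nMsgs N R)),
        Pmax W f φ ≤ K * (N : ℝ) ^ (-(1 + ρ) / 2) * exp (-N * (-ρ * R + Eo W ρ Q)) := by
  obtain ⟨K, hK, hbound⟩ := exists_rcuBound_iidDist_le hW hQ hns hρ₀ hρ₁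
  refine ⟨2 * K * 4 ^ ρ, by positivity, fun N hN => ?_⟩
  obtain ⟨f, φ, hfφ⟩ := exists_code_Pmax_le_rcuBound hW hQ N (nMsgs_pos N R)
  refine ⟨f, φ, ?_⟩
  rcases le_or_gt R 0 with hR | hR
  · have : Subsingleton (Fin (nMsgs N R)) := by
      rw [nMsgs_eq_one hR]
      infer_instance
    rw [Pmax_eq_zero]
    positivity
  have hM : (0 : ℝ) < 2 * nMsgs N R := mul_pos two_pos (Nat.cast_pos.mpr (nMsgs_pos N R))
  have hcount : 2 * (nMsgs N R : ℝ) ≤ 4 * exp (N * R) := by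
    linarith [nMsgs_le_two_mul_exp (N := N) hR.le]
  have hpow := Real.rpow_le_rpow hM.le hcount hρ₀.le
  calc Pmax W f φ ≤ 2 * (K * (N : ℝ) ^ (-(1 + ρ) / 2) * (2 * nMsgs N R) ^ ρ *
        exp (-(N * Eo W ρ Q))) := hfφ.trans (by gcongr; exact hbound N hN _ hM)
    _ ≤ 2 * (K * (N : ℝ) ^ (-(1 + ρ) / 2) * (4 * exp (N * R)) ^ ρ * exp (-(N * Eo W ρ Q))) := by
        gcongr _ * (_ * ?_ * _)
    _ = 2 * K * 4 ^ ρ * (N : ℝ) ^ (-(1 + ρ) / 2) *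
        (exp (N * R * ρ) * exp (-(N * Eo W ρ Q))) := by
        rw [Real.mul_rpow four_pos.le (exp_pos _).le, ← Real.exp_mul]
        ring
    _ = _ := by
        rw [← exp_add]
        ring_nf

end Codes

/-- If `W` is nonsingular at rate `R ∈ (R_cr, C)`, then for every `ε > 0` there
is an `(N,R)` code with maximal error probability at most
`K₄ · N^{-(1+ρ̄*_R-ε)/2} · exp(-N E_r(R))`. -/
theorem statement5 {X Y : Type*} [Fintype X] [Fintype Y] [Nonempty X] [Nonempty Y]
    (W : X → Y → ℝ) (hW : IsChannel W) (hcr : Rcr W < Capacity W)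
    (R : ℝ) (hR1 : Rcr W < R) (hR2 : R < Capacity W)
    (hns : ∃ Q : X → ℝ, IsDist Q ∧ ErQ W R Q = Er W R ∧ ¬ Singular W Q)
    (ρbar : ℝ)
    (hρbar : ρbar = sSup {v : ℝ | ∃ Q : X → ℝ,
      IsDist Q ∧ ErQ W R Q = Er W R ∧ ¬ Singular W Q ∧ v = rhoStarQ W Q R}) :
    ∀ ε : ℝ, 0 < ε → ∃ K : ℝ, 0 < K ∧ ∀ N : ℕ, 0 < N →
      ∃ (f : Fin (nMsgs N R) → Fin N → X) (φ : (Fin N → Y) → Fin (nMsgs N R)),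
        Pmax W f φ ≤
          K * (N : ℝ) ^ (-(1 + ρbar - ε) / 2) * Real.exp (-(N : ℝ) * Er W R) := by
  intro ε hε
  obtain ⟨Q₀, hQ₀, hE₀, hns₀⟩ := hns
  obtain ⟨_, ⟨Q, hQ, hE, hnsQ, rfl⟩, hlt⟩ := exists_lt_of_lt_csSup
    (s := {v : ℝ | ∃ Q : X → ℝ,
      IsDist Q ∧ ErQ W R Q = Er W R ∧ ¬ Singular W Q ∧ v = rhoStarQ W Q R})
    ⟨_, Q₀, hQ₀, hE₀, hns₀, rfl⟩ (hρbar ▸ sub_lt_self ρbar hε)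
  obtain ⟨ρ, hρ, hmax⟩ := exists_mem_Ioo_Er_eq hW hQ hR1 hR2 hE
  have hle : rhoStarQ W Q R ≤ ρ := rhoStarQ_le hW hQ (Set.Ioo_subset_Icc_self hρ) (hE.trans hmax)
  obtain ⟨K, hK, hcode⟩ := exists_code_Pmax_le_rpow_mul_exp hW hQ hnsQ hρ.1 hρ.2 R
  refine ⟨K, hK, fun N hN => ?_⟩
  obtain ⟨f, φ, hfφ⟩ := hcode N hN
  refine ⟨f, φ, hfφ.trans ?_⟩
  rw [← hmax]
  have hN1 : (1 : ℝ) ≤ N := by exact_mod_cast hN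
  gcongr
  linarith

end RCB
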